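/- arXiv:0903.2016 — 2 statements merged into one kernel-verified Lean document; each statement's English description precedes it below -/
import Mathlib

section
/- Let q be a prime power and let p(x_1, …, x_n) ∈ F_q[x_1, …, x_n] be an irreducible polynomial of total degree t ≥ 1. Then there exist a positive integer r dividing t, an absolutely irreducible polynomial h(x_1, …, x_n) ∈ F_{q^r}[x_1, …, x_n] of total degree t/r, and a constant c ∈ F_q, such that p(x_1, …, x_n) = c · Π_{σ ∈ G} σ(h(x_1, …, x_n)), where G = Gal(F_{q^r}/F_q) acts on polynomials coefficientwise. Furthermore, if p is homogeneous then h can be taken homogeneous. -/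
open MvPolynomial

/-!
Let `g` be an irreducible factor of `P` over the algebraic closure of `F`, scaled to have some
coefficient equal to `1`, and let `E` be the extension of `F` generated by the coefficients of `g`.
Then `g` descends to an absolutely irreducible `h` over `E`. Since the coefficients of `h` generate
`E`, its `Gal(E/F)`-conjugates are pairwise distinct, and because they share a coefficient `1` they
are even pairwise non-associated. So the product of the conjugates divides `P`; it has coefficients
in `F`, hence equals the irreducible `P` up to a constant. A finite field has only one extension of
each degree, so `E` may be replaced by any extension of the same degree `r`. Comparing degrees gives
`r * deg h = deg P`, and `h` is homogeneous when `P` is, as a factor of `P`.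
-/

section Homogeneous

variable {σ R : Type*}

theorem order_coe_le_totalDegree [CommSemiring R] {f : MvPolynomial σ R} (hf : f ≠ 0) :
    (f : MvPowerSeries σ R).order ≤ f.totalDegree := by
  obtain ⟨d, hd⟩ := ne_zero_iff.mp hf
  calc (f : MvPowerSeries σ R).order
      ≤ d.degree := MvPowerSeries.order_le (by rwa [coeff_coe])
    _ ≤ f.totalDegree := by exact_mod_cast le_totalDegree (mem_support_iff.mpr hd)

theorem isHomogeneous_iff_le_order_coe [CommSemiring R] {f : MvPolynomial σ R} :
    f.IsHomogeneous f.totalDegree ↔ (f.totalDegree : ℕ∞) ≤ (f : MvPowerSeries σ R).order := by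
  refine ⟨fun hf ↦ MvPowerSeries.nat_le_order fun d hd ↦ ?_, fun hf d hd ↦ ?_⟩
  · rw [coeff_coe]
    exact hf.coeff_eq_zero hd.ne
  · have order_le : (f : MvPowerSeries σ R).order ≤ d.degree :=
      MvPowerSeries.order_le (by rwa [coeff_coe])
    have le_degree : f.totalDegree ≤ d.degree := by exact_mod_cast hf.trans order_le
    have degree_le : d.degree ≤ f.totalDegree := le_totalDegree (mem_support_iff.mpr hd)
    exact (DFunLike.congr_fun Finsupp.degree_eq_weight_one d).symm.trans
      (le_antisymm degree_le le_degree)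

-- Both the total degree and the order are additive on products, and the order is at most the
-- total degree; so if they agree on a product, they agree on each factor.
theorem isHomogeneous_totalDegree_of_dvd [CommRing R] [IsDomain R] {f g : MvPolynomial σ R} {n : ℕ}
    (hg : g.IsHomogeneous n) (hg0 : g ≠ 0) (hfg : f ∣ g) : f.IsHomogeneous f.totalDegree := by
  obtain ⟨k, rfl⟩ := hfg
  have hf0 := left_ne_zero_of_mul hg0
  have hk0 := right_ne_zero_of_mul hg0
  rw [← hg.totalDegree hg0, isHomogeneous_iff_le_order_coe, totalDegree_mul_of_isDomain hf0 hk0,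
    coe_mul, MvPowerSeries.order_mul, Nat.cast_add] at hg
  rw [isHomogeneous_iff_le_order_coe]
  by_contra! hlt
  have hk := order_coe_le_totalDegree hk0
  have order_ne_top := ne_top_of_le_ne_top (ENat.natCast_ne_top _) hk
  exact hg.not_gt (WithTop.add_lt_add_of_lt_of_le order_ne_top hlt hk)

end Homogeneous

section Degree

variable {σ R : Type*}

theorem totalDegree_map_of_injective [CommSemiring R] {S : Type*} [CommSemiring S] {f : R →+* S}
    (hf : Function.Injective f) (p : MvPolynomial σ R) : (map f p).totalDegree = p.totalDegree := by
  simp only [totalDegree, support_map_of_injective p hf]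

theorem totalDegree_prod_of_isDomain [CommRing R] [IsDomain R] {ι : Type*} (s : Finset ι)
    {f : ι → MvPolynomial σ R} (hf : ∀ i ∈ s, f i ≠ 0) :
    (∏ i ∈ s, f i).totalDegree = ∑ i ∈ s, (f i).totalDegree := by
  classical
  induction s using Finset.induction_on with
  | empty => simp
  | insert a s ha ih =>
    rw [Finset.forall_mem_insert] at hf
    rw [Finset.prod_insert ha, Finset.sum_insert ha,
      totalDegree_mul_of_isDomain hf.1 (Finset.prod_ne_zero_iff.mpr hf.2), ih hf.2]

end Degree

section Descent

attribute [local instance] algebraMvPolynomial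

variable {σ : Type*}

theorem faithfullyFlat_mvPolynomial (A B : Type*) [CommRing A] [CommRing B] [Algebra A B]
    [Module.FaithfullyFlat A B] : Module.FaithfullyFlat (MvPolynomial σ A) (MvPolynomial σ B) :=
  .of_linearEquiv _ _
    (Algebra.IsPushout.equiv A (MvPolynomial σ A) B (MvPolynomial σ B)).symm.toLinearEquiv

theorem algebraMap_dvd_algebraMap_iff {A B : Type*} [CommRing A] [CommRing B] [Algebra A B]
    [Module.FaithfullyFlat A B] {a b : A} : algebraMap A B a ∣ algebraMap A B b ↔ a ∣ b := by
  rw [← Ideal.mem_span_singleton, ← Set.image_singleton, ← Ideal.map_span, ← Ideal.mem_comap,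
    Ideal.comap_map_eq_self_of_faithfullyFlat, Ideal.mem_span_singleton]

variable {A B : Type*} [Field A] [Field B] (f : A →+* B)

theorem map_dvd_map_iff {p q : MvPolynomial σ A} : map f p ∣ map f q ↔ p ∣ q := by
  let := f.toAlgebra
  have := faithfullyFlat_mvPolynomial (σ := σ) A B
  exact algebraMap_dvd_algebraMap_iff (A := MvPolynomial σ A) (B := MvPolynomial σ B)

theorem isUnit_map_mvPolynomial_iff {p : MvPolynomial σ A} : IsUnit (map f p) ↔ IsUnit p := by
  simp only [isUnit_iff_dvd_one, ← map_dvd_map_iff f, map_one]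

theorem irreducible_of_irreducible_map {p : MvPolynomial σ A} (hp : Irreducible (map f p)) :
    Irreducible p :=
  have : IsLocalHom (map (σ := σ) f) := ⟨fun _ ↦ (isUnit_map_mvPolynomial_iff f).mp⟩
  hp.of_map

end Descent

section Normalization

variable {σ : Type*}

theorem exists_irreducible_dvd_coeff_eq_one {K : Type*} [Field K] {p : MvPolynomial σ K}
    (hp0 : p ≠ 0) (hpu : ¬IsUnit p) : ∃ g m, Irreducible g ∧ g ∣ p ∧ coeff m g = 1 := by
  obtain ⟨g, hg, hgp⟩ := WfDvdMonoid.exists_irreducible_factor hpu hp0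
  obtain ⟨m, hm⟩ := ne_zero_iff.mp hg.ne_zero
  have hu : IsUnit (C (coeff m g)⁻¹ : MvPolynomial σ K) := (inv_ne_zero hm).isUnit.map C
  exact ⟨C (coeff m g)⁻¹ * g, m, (irreducible_isUnit_mul hu).mpr hg, hu.mul_left_dvd.mpr hgp,
    by rw [coeff_C_mul, inv_mul_cancel₀ hm]⟩

theorem eq_of_associated_of_coeff_eq_one {R : Type*} [CommRing R] [IsReduced R]
    {p q : MvPolynomial σ R} {m : σ →₀ ℕ} (hp : coeff m p = 1) (hq : coeff m q = 1)
    (hpq : Associated p q) : p = q := by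
  obtain ⟨u, rfl⟩ := hpq
  obtain ⟨x, -, hx⟩ := isUnit_iff_eq_C_of_isReduced.mp u.isUnit
  rw [hx, mul_comm, coeff_C_mul, hp, mul_one] at hq
  rw [hx, hq, C_1, mul_one]

end Normalization

/-- A polynomial over a field is absolutely irreducible if it is irreducible over the algebraic
closure. -/
def IsAbsolutelyIrreducible {σ E : Type*} [Field E] (h : MvPolynomial σ E) : Prop :=
  Irreducible (map (algebraMap E (AlgebraicClosure E)) h)

namespace IsAbsolutelyIrreducible

variable {σ E : Type*} [Field E] {h : MvPolynomial σ E}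

theorem of_irreducible_map {K : Type*} [Field K] [IsAlgClosed K] (f : E →+* K)
    (hh : Irreducible (map f h)) : IsAbsolutelyIrreducible h := by
  let := f.toAlgebra
  let ψ : AlgebraicClosure E →ₐ[E] K := IsAlgClosed.lift
  apply irreducible_of_irreducible_map (ψ : AlgebraicClosure E →+* K)
  rwa [map_map, ψ.comp_algebraMap]

theorem irreducible (hh : IsAbsolutelyIrreducible h) : Irreducible h :=
  irreducible_of_irreducible_map _ hh

end IsAbsolutelyIrreducible

theorem algHom_ext_of_adjoin_eq_top {F E K : Type*} [Field F] [Field E] [Algebra F E] [Semiring K]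
    [Algebra F K] {S : Set E} (hS : IntermediateField.adjoin F S = ⊤) {φ ψ : E →ₐ[F] K}
    (h : Set.EqOn φ ψ S) : φ = ψ := by
  let ι := (⊤ : IntermediateField F E).val
  have comp_eq : φ.comp ι = ψ.comp ι :=
    IntermediateField.algHom_ext_of_eq_adjoin F hS.symm fun _ hx ↦ h hx
  exact AlgHom.ext fun x ↦ DFunLike.congr_fun comp_eq ⟨x, IntermediateField.mem_top⟩

section Galois

variable {σ F E : Type*} [Field F] [Field E] [Algebra F E]

theorem map_algEquiv_map_algEquiv (τ ρ : Gal(E/F)) (h : MvPolynomial σ E) :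
    map (τ : E →+* E) (map (ρ : E →+* E) h) = map ((τ * ρ : Gal(E/F)) : E →+* E) h :=
  map_map ..

theorem map_algEquiv_map_algebraMap (τ : Gal(E/F)) (p : MvPolynomial σ F) :
    map (τ : E →+* E) (map (algebraMap F E) p) = map (algebraMap F E) p := by
  rw [map_map]
  congr 2
  exact (τ : E →ₐ[F] E).comp_algebraMap

theorem irreducible_map_algEquiv_iff (τ : Gal(E/F)) {h : MvPolynomial σ E} :
    Irreducible (map (τ : E →+* E) h) ↔ Irreducible h :=
  MulEquiv.irreducible_iff (mapEquiv σ τ.toRingEquiv)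

theorem mem_range_map_algebraMap_iff_fixed [FiniteDimensional F E] [IsGalois F E]
    {p : MvPolynomial σ E} :
    p ∈ Set.range (map (algebraMap F E)) ↔ ∀ τ : Gal(E/F), map (τ : E →+* E) p = p := by
  refine ⟨?_, fun hp ↦ ?_⟩
  · rintro ⟨q, rfl⟩ τ
    exact map_algEquiv_map_algebraMap τ q
  · rw [mem_range_map_iff_coeffs_subset]
    intro x hx
    obtain ⟨d, -, rfl⟩ := mem_coeffs_iff.mp hx
    rw [IsGalois.mem_range_algebraMap_iff_fixed]
    intro τ
    exact (coeff_map ..).symm.trans (congrArg (coeff d) (hp τ))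

theorem map_algEquiv_injective_of_adjoin_coeffs_eq_top {h : MvPolynomial σ E}
    (hgen : IntermediateField.adjoin F (h.coeffs : Set E) = ⊤) :
    Function.Injective fun τ : Gal(E/F) ↦ map (τ : E →+* E) h := by
  intro τ ρ hτρ
  have eqOn_coeffs : Set.EqOn (τ : E →ₐ[F] E) (ρ : E →ₐ[F] E) h.coeffs := by
    intro x hx
    obtain ⟨d, -, rfl⟩ := mem_coeffs_iff.mp hx
    exact (coeff_map ..).symm.trans ((congrArg (coeff d) hτρ).trans (coeff_map ..))
  exact AlgEquiv.coe_toAlgHom_injective (algHom_ext_of_adjoin_eq_top hgen eqOn_coeffs)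

theorem exists_map_eq_of_fieldRange_eq_adjoin_coeffs {K : Type*} [Field K] [Algebra F K]
    (φ : E →ₐ[F] K) {g : MvPolynomial σ K}
    (hφ : φ.fieldRange = IntermediateField.adjoin F (g.coeffs : Set K)) :
    ∃ h : MvPolynomial σ E,
      map (φ : E →+* K) h = g ∧ IntermediateField.adjoin F (h.coeffs : Set E) = ⊤ := by
  obtain ⟨h, rfl⟩ : g ∈ Set.range (map (φ : E →+* K)) := by
    rw [mem_range_map_iff_coeffs_subset]
    intro x hx
    exact hφ.ge (IntermediateField.subset_adjoin F _ hx)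
  have range_le : φ.fieldRange ≤ (IntermediateField.adjoin F (h.coeffs : Set E)).map φ := by
    rw [hφ, IntermediateField.adjoin_map]
    exact IntermediateField.adjoin.mono _ _ _ (coe_coeffs_map _ h)
  refine ⟨h, rfl, top_le_iff.mp fun x _ ↦ ?_⟩
  obtain ⟨y, hy, hyx⟩ := range_le ⟨x, rfl⟩
  exact φ.injective hyx ▸ hy

variable (F) in
/-- The norm of a polynomial over `E`, relative to a finite extension `E / F`: the product of its
conjugates under `Gal(E/F)`, which acts coefficientwise. -/
noncomputable def galoisNorm [FiniteDimensional F E] (h : MvPolynomial σ E) : MvPolynomial σ E :=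
  ∏ τ : Gal(E/F), map (τ : E →+* E) h

variable [FiniteDimensional F E]

theorem map_algEquiv_galoisNorm (τ : Gal(E/F)) (h : MvPolynomial σ E) :
    map (τ : E →+* E) (galoisNorm F h) = galoisNorm F h := by
  simp only [galoisNorm, map_prod, map_algEquiv_map_algEquiv]
  exact Fintype.prod_equiv (Equiv.mulLeft τ) _ _ fun _ ↦ rfl

theorem dvd_galoisNorm (h : MvPolynomial σ E) : h ∣ galoisNorm F h := by
  have h_dvd := Finset.dvd_prod_of_mem (fun τ : Gal(E/F) ↦ map (τ : E →+* E) h) (Finset.mem_univ 1)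
  rwa [show map ((1 : Gal(E/F)) : E →+* E) h = h from map_id h] at h_dvd

theorem totalDegree_galoisNorm [IsGalois F E] {h : MvPolynomial σ E} (hh : h ≠ 0) :
    (galoisNorm F h).totalDegree = Module.finrank F E * h.totalDegree := by
  have map_ne_zero (τ : Gal(E/F)) : map (τ : E →+* E) h ≠ 0 :=
    (map_ne_zero_iff _ (map_injective _ (τ : E →+* E).injective)).mpr hh
  rw [galoisNorm, totalDegree_prod_of_isDomain _ fun τ _ ↦ map_ne_zero τ]
  have totalDegree_map (τ : Gal(E/F)) : (map (τ : E →+* E) h).totalDegree = h.totalDegree :=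
    totalDegree_map_of_injective (τ : E →+* E).injective h
  rw [Finset.sum_congr rfl fun τ _ ↦ totalDegree_map τ, Finset.sum_const, Finset.card_univ,
    ← Nat.card_eq_fintype_card, IsGalois.card_aut_eq_finrank, smul_eq_mul]

theorem galoisNorm_dvd_map {P : MvPolynomial σ F} {h : MvPolynomial σ E} (hh : Irreducible h)
    {m : σ →₀ ℕ} (hm : coeff m h = 1)
    (hgen : IntermediateField.adjoin F (h.coeffs : Set E) = ⊤)
    (hhP : h ∣ map (algebraMap F E) P) : galoisNorm F h ∣ map (algebraMap F E) P := by
  refine Finset.prod_dvd_of_isRelPrime (fun τ _ ρ _ hne ↦ ?_) fun τ _ ↦ ?_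
  · have hτ := (irreducible_map_algEquiv_iff τ).mpr hh
    have hρ := (irreducible_map_algEquiv_iff ρ).mpr hh
    refine hτ.isRelPrime_iff_not_dvd.mpr fun hdvd ↦ hne ?_
    apply map_algEquiv_injective_of_adjoin_coeffs_eq_top hgen
    exact eq_of_associated_of_coeff_eq_one (m := m) (by simp [coeff_map, hm])
      (by simp [coeff_map, hm]) (hτ.associated_of_dvd hρ hdvd)
  · rw [← map_algEquiv_map_algebraMap τ]
    exact map_dvd _ hhP

theorem exists_map_eq_C_mul_galoisNorm [IsGalois F E] {P : MvPolynomial σ F} (hP : Irreducible P)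
    {h : MvPolynomial σ E} (hh : Irreducible h) {m : σ →₀ ℕ} (hm : coeff m h = 1)
    (hgen : IntermediateField.adjoin F (h.coeffs : Set E) = ⊤)
    (hhP : h ∣ map (algebraMap F E) P) :
    ∃ c : F, map (algebraMap F E) P = C (algebraMap F E c) * galoisNorm F h := by
  obtain ⟨N, hN⟩ : galoisNorm F h ∈ Set.range (map (algebraMap F E)) :=
    mem_range_map_algebraMap_iff_fixed.mpr fun τ ↦ map_algEquiv_galoisNorm τ h
  have hNP : N ∣ P := by
    rw [← map_dvd_map_iff (algebraMap F E), hN]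
    exact galoisNorm_dvd_map hh hm hgen hhP
  have hNu : ¬IsUnit N := by
    rw [← isUnit_map_mvPolynomial_iff (algebraMap F E), hN]
    exact not_isUnit_of_not_isUnit_dvd hh.not_isUnit (dvd_galoisNorm h)
  obtain ⟨u, rfl⟩ := hNP
  have hu : IsUnit u := (hP.isUnit_or_isUnit rfl).resolve_left hNu
  obtain ⟨c, -, rfl⟩ := isUnit_iff_eq_C_of_isReduced.mp hu
  exact ⟨c, by rw [map_mul, hN, map_C, mul_comm]⟩

section Factorization

variable {P : MvPolynomial σ F} {h : MvPolynomial σ E} {c : F}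

theorem finrank_mul_totalDegree_of_map_eq_C_mul_galoisNorm [IsGalois F E] (hP : P ≠ 0)
    (hfac : map (algebraMap F E) P = C (algebraMap F E c) * galoisNorm F h) :
    Module.finrank F E * h.totalDegree = P.totalDegree := by
  have hne : C (algebraMap F E c) * galoisNorm F h ≠ 0 := by
    rw [← hfac]
    exact (map_ne_zero_iff _ (map_injective _ (algebraMap F E).injective)).mpr hP
  have hN := right_ne_zero_of_mul hne
  rw [← totalDegree_map_of_injective (algebraMap F E).injective P, hfac,
    totalDegree_mul_of_isDomain (left_ne_zero_of_mul hne) hN, totalDegree_C, zero_add,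
    totalDegree_galoisNorm (ne_zero_of_dvd_ne_zero hN (dvd_galoisNorm h))]

theorem isHomogeneous_of_map_eq_C_mul_galoisNorm (hP : P ≠ 0) {t : ℕ} (ht : P.IsHomogeneous t)
    (hfac : map (algebraMap F E) P = C (algebraMap F E c) * galoisNorm F h) :
    h.IsHomogeneous h.totalDegree := by
  refine isHomogeneous_totalDegree_of_dvd (ht.map (algebraMap F E)) ?_ ?_
  · exact (map_ne_zero_iff _ (map_injective _ (algebraMap F E).injective)).mpr hP
  · rw [hfac]
    exact (dvd_galoisNorm h).mul_left _

end Factorization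

theorem exists_isAbsolutelyIrreducible_map_eq_C_mul_galoisNorm [IsGalois F E] {K : Type*} [Field K]
    [IsAlgClosed K] [Algebra F K] {P : MvPolynomial σ F} (hP : Irreducible P)
    {g : MvPolynomial σ K} (hg : Irreducible g) {m : σ →₀ ℕ} (hm : coeff m g = 1)
    (hgP : g ∣ map (algebraMap F K) P) (φ : E →ₐ[F] K)
    (hφ : φ.fieldRange = IntermediateField.adjoin F (g.coeffs : Set K)) :
    ∃ (h : MvPolynomial σ E) (c : F), IsAbsolutelyIrreducible h ∧
      map (algebraMap F E) P = C (algebraMap F E c) * galoisNorm F h := by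
  obtain ⟨h, rfl, hgen⟩ := exists_map_eq_of_fieldRange_eq_adjoin_coeffs φ hφ
  have hh := IsAbsolutelyIrreducible.of_irreducible_map _ hg
  have hmh : coeff m h = 1 := φ.injective (by simpa [coeff_map] using hm)
  have hhP : h ∣ map (algebraMap F E) P := by
    rw [← map_dvd_map_iff (φ : E →+* K), map_map, φ.comp_algebraMap]
    exact hgP
  obtain ⟨c, hc⟩ := exists_map_eq_C_mul_galoisNorm hP hh.irreducible hmh hgen hhP
  exact ⟨h, c, hh, hc⟩

end Galois

theorem nonempty_algEquiv_of_finrank_eq {F E L : Type*} [Field F] [Finite F] [Field E] [Algebra F E]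
    [Field L] [Algebra F L] [FiniteDimensional F L]
    (h : Module.finrank F E = Module.finrank F L) : Nonempty (E ≃ₐ[F] L) := by
  have := Module.finite_of_finite F (M := L)
  have : FiniteDimensional F E := Module.finite_of_finrank_pos (h ▸ Module.finrank_pos)
  obtain ⟨ψ⟩ := FiniteField.nonempty_algHom_of_finrank_dvd h.dvd
  exact ⟨.ofBijective ψ ⟨ψ.injective, (LinearMap.injective_iff_surjective_of_finrank_eq_finrank
    (f := ψ.toLinearMap) h).mp ψ.injective⟩⟩

theorem exists_algHom_fieldRange_eq_of_finrank_eq {F E K : Type*} [Field F] [Finite F] [Field E]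
    [Algebra F E] [Field K] [Algebra F K] (L : IntermediateField F K) [FiniteDimensional F L]
    (h : Module.finrank F E = Module.finrank F L) : ∃ φ : E →ₐ[F] K, φ.fieldRange = L := by
  obtain ⟨e⟩ := nonempty_algEquiv_of_finrank_eq h
  refine ⟨L.val.comp (e : E →ₐ[F] L), ?_⟩
  rw [← AlgHom.map_fieldRange, e.fieldRange_eq_top, ← AlgHom.fieldRange_eq_map, L.fieldRange_val]

theorem stmt_13_general.{v} {σ F : Type*} [Field F] [Finite F] {P : MvPolynomial σ F}
    (hP : Irreducible P) :
    ∃ r : ℕ, 0 < r ∧ r ∣ P.totalDegree ∧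
      ∀ (E : Type v) [Field E] [Algebra F E] [FiniteDimensional F E],
        Module.finrank F E = r →
        ∃ (h : MvPolynomial σ E) (c : F),
          IsAbsolutelyIrreducible h ∧
          h.totalDegree = P.totalDegree / r ∧
          map (algebraMap F E) P = C (algebraMap F E c) * galoisNorm F h ∧
          (P.IsHomogeneous P.totalDegree → h.IsHomogeneous (P.totalDegree / r)) := by
  let K := AlgebraicClosure F
  obtain ⟨g, m, hg, hgP, hm⟩ := exists_irreducible_dvd_coeff_eq_one
    ((map_ne_zero_iff _ (map_injective _ (algebraMap F K).injective)).mpr hP.ne_zero)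
    ((isUnit_map_mvPolynomial_iff _).not.mpr hP.not_isUnit)
  let L := IntermediateField.adjoin F (g.coeffs : Set K)
  have : FiniteDimensional F L :=
    IntermediateField.finiteDimensional_adjoin fun x _ ↦ Algebra.IsIntegral.isIntegral x
  have : Finite L := Module.finite_of_finite F
  refine ⟨Module.finrank F L, Module.finrank_pos, ?_, fun E _ _ _ hE ↦ ?_⟩
  · obtain ⟨h, c, -, hc⟩ := exists_isAbsolutelyIrreducible_map_eq_C_mul_galoisNorm hP hg hm hgP
      L.val L.fieldRange_val
    exact ⟨_, (finrank_mul_totalDegree_of_map_eq_C_mul_galoisNorm hP.ne_zero hc).symm⟩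
  · have : Finite E := Module.finite_of_finite F
    obtain ⟨φ, hφ⟩ := exists_algHom_fieldRange_eq_of_finrank_eq L hE
    obtain ⟨h, c, hh, hc⟩ := exists_isAbsolutelyIrreducible_map_eq_C_mul_galoisNorm hP hg hm hgP
      φ hφ
    have hdeg : h.totalDegree = P.totalDegree / Module.finrank F L := by
      rw [← finrank_mul_totalDegree_of_map_eq_C_mul_galoisNorm hP.ne_zero hc, hE,
        Nat.mul_div_cancel_left _ Module.finrank_pos]
    exact ⟨h, c, hh, hdeg, hc,
      fun ht ↦ hdeg ▸ isHomogeneous_of_map_eq_C_mul_galoisNorm hP.ne_zero ht hc⟩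

/-- An irreducible polynomial of degree `t` over the finite field `F` (of prime-power
cardinality `q`) is, up to a constant in `F`, the product of the `Gal(F_{q^r}/F_q)`-conjugates
of an absolutely irreducible polynomial `h` of degree `t/r` over `F_{q^r}`, for some `r ∣ t`;
moreover if `p` is homogeneous then `h` can be taken homogeneous. -/
theorem stmt_13 (p' k q n t : ℕ) [Fact (Nat.Prime p')] (hk : 0 < k) (hq : q = p' ^ k)
    (F : Type*) [Field F] [Fintype F] (hF : Fintype.card F = q)
    (P : MvPolynomial (Fin n) F) (hirr : Irreducible P)
    (hdeg : P.totalDegree = t) (ht : 1 ≤ t) :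
    ∃ r : ℕ, 0 < r ∧ r ∣ t ∧
      ∀ (E : Type) [Field E] [Algebra F E] [FiniteDimensional F E],
        Module.finrank F E = r →
        ∃ (h : MvPolynomial (Fin n) E) (c : F),
          Irreducible (MvPolynomial.map (algebraMap E (AlgebraicClosure E)) h) ∧
          h.totalDegree = t / r ∧
          MvPolynomial.map (algebraMap F E) P =
            C (algebraMap F E c) *
              (∏ σ : E ≃ₐ[F] E, MvPolynomial.map (σ : E →+* E) h) ∧
          (P.IsHomogeneous t → h.IsHomogeneous (t / r)) := by
  subst hdeg
  exact stmt_13_general hirr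
end

section
/- Let t = 2^i·ℓ + 1 where i ≥ 1 and ℓ ≥ 3 is odd, with ℓ dividing 2^i − 1 and ℓ ≠ 2^i − 1. Suppose g_t(x,y) is irreducible in F_2[x,y]. Then there is no factorization g_t = g_1 · g_2 over the algebraic closure of F_2 with g_1 and g_2 nonconstant polynomials of equal total degree. -/
open MvPolynomial

/-!
Suppose `f_t = u v` over an algebraically closed field of characteristic `2`, with `t = q ℓ + 1` and
`q = 2 ^ i`. The common zeros of `u` and `v` are singular points of `f_t`, and these are the points
for which `x`, `y` and `x + y + 1` are `ℓ`-th roots of unity. There are at most `ℓ ^ 2 - ℓ + 1` of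
them: if the roots of unity were stable under the translation by some `a ≠ 0`, then comparing the
sums over both sides would give `ℓ a = 0`. At each singular point the tangent cone of `f_t` is a
squarefree form of degree `q + 1`, so `u` and `v` have coprime tangent cones there, of degrees
`a + b = q + 1`, and their intersection multiplicity is `a b ≤ (q + 1) ^ 2 / 4`. At infinity the
leading form of `f_t` is far from squarefree, but a common factor of the leading forms of `u` and
`v` would also divide the next homogeneous part `(x + y) ^ (t - 1)`, which rules it out. Bézout's
theorem therefore gives `4 deg u deg v ≤ (ℓ ^ 2 - ℓ + 1) (q + 1) ^ 2`. Since `q ≥ 2 ℓ + 1`, this is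
less than `(q ℓ + 1) ^ 2 - 9`, so the degrees of `u` and `v` differ by more than `3`, the degree of
`(x + 1) (y + 1) (x + y)`.

Both halves of Bézout's theorem come from the exactness of the Koszul complex of `u` and `v` with
respect to a filtration whose initial forms are coprime: the order of vanishing at a point bounds
the local multiplicities from above, the degree bounds their sum from below.
-/

section WeightFiltration

variable {σ R : Type*}

section CommRing

variable [CommRing R] {w : σ → ℤ}

variable (R) in
/-- The polynomials all of whose monomials have weight at least `n`: a decreasing filtration of the
polynomial ring. For the weight `1` the index is the order of vanishing at the origin, for the
weight `-1` it is the negative of the total degree. -/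
noncomputable def weightFiltration (w : σ → ℤ) (n : ℤ) : Submodule R (MvPolynomial σ R) :=
  restrictSupport R {s | n ≤ Finsupp.weight w s}

theorem mem_weightFiltration {n : ℤ} {p : MvPolynomial σ R} :
    p ∈ weightFiltration R w n ↔ ∀ s, p.coeff s ≠ 0 → n ≤ Finsupp.weight w s := by
  simp only [weightFiltration, mem_restrictSupport_iff, Set.subset_def, Finset.mem_coe,
    mem_support_iff, Set.mem_ofPred_eq]

theorem weightFiltration_antitone : Antitone (weightFiltration R w) :=
  fun _ _ hmn ↦ restrictSupport_mono R fun _ hs ↦ hmn.trans hs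

theorem mul_mem_weightFiltration {m n : ℤ} {p q : MvPolynomial σ R}
    (hp : p ∈ weightFiltration R w m) (hq : q ∈ weightFiltration R w n) :
    p * q ∈ weightFiltration R w (m + n) := by
  classical
  rw [mem_weightFiltration] at hp hq ⊢
  intro s hs
  rw [coeff_mul] at hs
  obtain ⟨⟨a, b⟩, hab, hne⟩ := Finset.exists_ne_zero_of_sum_ne_zero hs
  rw [← Finset.HasAntidiagonal.mem_antidiagonal.mp hab, map_add]
  exact add_le_add (hp a (left_ne_zero_of_mul hne)) (hq b (right_ne_zero_of_mul hne))

theorem one_mem_weightFiltration : (1 : MvPolynomial σ R) ∈ weightFiltration R w 0 := by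
  classical
  rw [mem_weightFiltration]
  intro s hs
  rw [coeff_one] at hs
  obtain rfl : 0 = s := by_contra fun h ↦ hs (if_neg h)
  exact (map_zero _).ge

theorem pow_mem_weightFiltration {n : ℤ} {p : MvPolynomial σ R} (hp : p ∈ weightFiltration R w n)
    (k : ℕ) : p ^ k ∈ weightFiltration R w (k * n) := by
  induction k with
  | zero => simpa using one_mem_weightFiltration
  | succ k ih =>
    rw [pow_succ, Nat.cast_succ, add_one_mul]
    exact mul_mem_weightFiltration ih hp

theorem mul_sub_mul_mem_weightFiltration {m n : ℤ} {p q F G : MvPolynomial σ R}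
    (hF : F ∈ weightFiltration R w m) (hpF : p - F ∈ weightFiltration R w (m + 1))
    (hq : q ∈ weightFiltration R w n) (hqG : q - G ∈ weightFiltration R w (n + 1)) :
    p * q - F * G ∈ weightFiltration R w (m + n + 1) := by
  rw [show p * q - F * G = (p - F) * q + F * (q - G) by ring]
  refine add_mem ?_ ?_
  · rw [add_right_comm]
    exact mul_mem_weightFiltration hpF hq
  · rw [add_assoc]
    exact mul_mem_weightFiltration hF hqG

theorem exists_mem_weightFiltration (w : σ → ℤ) (p : MvPolynomial σ R) :
    ∃ n, p ∈ weightFiltration R w n := by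
  obtain ⟨n, hn⟩ := (p.support.image (Finsupp.weight w)).bddBelow
  exact ⟨n, mem_weightFiltration.mpr fun s hs ↦
    hn (Finset.mem_coe.mpr (Finset.mem_image_of_mem _ (mem_support_iff.mpr hs)))⟩

theorem mem_weightFiltration_of_isWeightedHomogeneous {n : ℤ} {p : MvPolynomial σ R}
    (hp : IsWeightedHomogeneous w p n) : p ∈ weightFiltration R w n :=
  mem_weightFiltration.mpr fun _ hs ↦ (hp hs).ge

theorem eq_zero_of_isWeightedHomogeneous_of_mem {n : ℤ} {p : MvPolynomial σ R}
    (hp : IsWeightedHomogeneous w p n) (hmem : p ∈ weightFiltration R w (n + 1)) : p = 0 := by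
  ext s
  by_contra hs
  have := mem_weightFiltration.mp hmem s hs
  have := hp hs
  lia

theorem sub_weightedHomogeneousComponent_mem {n : ℤ} {p : MvPolynomial σ R}
    (hp : p ∈ weightFiltration R w n) :
    p - weightedHomogeneousComponent w n p ∈ weightFiltration R w (n + 1) := by
  classical
  rw [mem_weightFiltration] at hp ⊢
  intro s hs
  rw [coeff_sub, coeff_weightedHomogeneousComponent] at hs
  split_ifs at hs with h
  · simp at hs
  · have := hp s (by simpa using hs)
    lia

/-- `F` is the nonzero homogeneous part of least weight of `p`, and `n` is that weight. For the
weight `1` this is the tangent cone of `p` at the origin, for the weight `-1` its leading form. -/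
structure HasInitialForm (w : σ → ℤ) (p : MvPolynomial σ R) (n : ℤ) (F : MvPolynomial σ R) :
    Prop where
  ne_zero : F ≠ 0
  isWeightedHomogeneous : IsWeightedHomogeneous w F n
  sub_mem_succ : p - F ∈ weightFiltration R w (n + 1)

namespace HasInitialForm

variable {m n : ℤ} {p q F G : MvPolynomial σ R}

theorem mem (h : HasInitialForm w p n F) : p ∈ weightFiltration R w n := by
  simpa using add_mem (weightFiltration_antitone (by lia) h.sub_mem_succ)
    (mem_weightFiltration_of_isWeightedHomogeneous h.isWeightedHomogeneous)

theorem le_of_mem (h : HasInitialForm w p n F) (hp : p ∈ weightFiltration R w m) : m ≤ n := by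
  by_contra! hlt
  have hF := sub_mem (weightFiltration_antitone (Int.add_one_le_of_lt hlt) hp) h.sub_mem_succ
  rw [sub_sub_cancel] at hF
  exact h.ne_zero (eq_zero_of_isWeightedHomogeneous_of_mem h.isWeightedHomogeneous hF)

theorem left_ne_zero (h : HasInitialForm w p n F) : p ≠ 0 := by
  rintro rfl
  have := h.le_of_mem (zero_mem (weightFiltration R w (n + 1)))
  lia

theorem unique (hF : HasInitialForm w p m F) (hG : HasInitialForm w p n G) :
    m = n ∧ F = G := by
  obtain rfl : m = n := le_antisymm (hG.le_of_mem hF.mem) (hF.le_of_mem hG.mem)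
  have h := sub_mem hG.sub_mem_succ hF.sub_mem_succ
  rw [sub_sub_sub_cancel_left] at h
  exact ⟨rfl, sub_eq_zero.mp (eq_zero_of_isWeightedHomogeneous_of_mem
    (hF.isWeightedHomogeneous.sub hG.isWeightedHomogeneous) h)⟩

theorem self (hF : IsWeightedHomogeneous w F n) (hne : F ≠ 0) : HasInitialForm w F n F :=
  ⟨hne, hF, by simp⟩

theorem exists_of_ne_zero (w : σ → ℤ) (hp : p ≠ 0) : ∃ n F, HasInitialForm w p n F := by
  classical
  obtain ⟨s, hs, hmin⟩ :=
    p.support.exists_min_image (Finsupp.weight w) (support_nonempty.mpr hp)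
  refine ⟨Finsupp.weight w s, weightedHomogeneousComponent w _ p, ?_,
    weightedHomogeneousComponent_isWeightedHomogeneous _ _,
    sub_weightedHomogeneousComponent_mem <| mem_weightFiltration.mpr fun s' hs' ↦
      hmin s' (mem_support_iff.mpr hs')⟩
  refine ne_zero_iff.mpr ⟨s, ?_⟩
  rw [coeff_weightedHomogeneousComponent, if_pos rfl]
  exact mem_support_iff.mp hs

theorem mul [IsDomain R] (hp : HasInitialForm w p m F) (hq : HasInitialForm w q n G) :
    HasInitialForm w (p * q) (m + n) (F * G) where
  ne_zero := mul_ne_zero hp.ne_zero hq.ne_zero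
  isWeightedHomogeneous := hp.isWeightedHomogeneous.mul hq.isWeightedHomogeneous
  sub_mem_succ := mul_sub_mul_mem_weightFiltration
    (mem_weightFiltration_of_isWeightedHomogeneous hp.isWeightedHomogeneous) hp.sub_mem_succ
    hq.mem hq.sub_mem_succ

theorem mem_of_mul_mem [IsDomain R] (hq : HasInitialForm w q n G)
    (h : p * q ∈ weightFiltration R w (m + n)) : p ∈ weightFiltration R w m := by
  rcases eq_or_ne p 0 with rfl | hp
  · exact zero_mem _
  obtain ⟨k, F, hF⟩ := exists_of_ne_zero w hp
  exact weightFiltration_antitone (by have := (hF.mul hq).le_of_mem h; lia) hF.mem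

end HasInitialForm

end CommRing

section Syzygy

variable [CommRing R] {w : σ → ℤ} {a b n : ℤ} {c d u v U V : MvPolynomial σ R}

theorem weightedHomogeneousComponent_mul_add_eq_zero (hu : HasInitialForm w u a U)
    (hv : HasInitialForm w v b V) (hc : c ∈ weightFiltration R w (n - a))
    (hd : d ∈ weightFiltration R w (n - b)) (h : c * u + d * v ∈ weightFiltration R w (n + 1)) :
    weightedHomogeneousComponent w (n - a) c * U +
      weightedHomogeneousComponent w (n - b) d * V = 0 := by
  have hΓ : IsWeightedHomogeneous w (weightedHomogeneousComponent w (n - a) c) (n - a) :=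
    weightedHomogeneousComponent_isWeightedHomogeneous ..
  have hΔ : IsWeightedHomogeneous w (weightedHomogeneousComponent w (n - b) d) (n - b) :=
    weightedHomogeneousComponent_isWeightedHomogeneous ..
  have hΓU := hΓ.mul hu.isWeightedHomogeneous
  have hΔV := hΔ.mul hv.isWeightedHomogeneous
  have hcu := mul_sub_mul_mem_weightFiltration (mem_weightFiltration_of_isWeightedHomogeneous hΓ)
    (sub_weightedHomogeneousComponent_mem hc) hu.mem hu.sub_mem_succ
  have hdv := mul_sub_mul_mem_weightFiltration (mem_weightFiltration_of_isWeightedHomogeneous hΔ)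
    (sub_weightedHomogeneousComponent_mem hd) hv.mem hv.sub_mem_succ
  rw [sub_add_cancel] at hΓU hΔV hcu hdv
  refine eq_zero_of_isWeightedHomogeneous_of_mem (hΓU.add hΔV) ?_
  convert sub_mem h (add_mem hcu hdv) using 1
  ring

variable [IsDomain R] [DecompositionMonoid (MvPolynomial σ R)]

theorem exists_sub_mul_mul_mem_succ (hu : HasInitialForm w u a U) (hv : HasInitialForm w v b V)
    (hUV : IsRelPrime U V) (hcu : c * u ∈ weightFiltration R w n)
    (h : c * u + d * v ∈ weightFiltration R w (n + 1)) :
    ∃ e, (c - e * v) * u ∈ weightFiltration R w (n + 1) := by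
  have hdv : d * v ∈ weightFiltration R w n := by
    simpa using sub_mem (weightFiltration_antitone (by lia) h) hcu
  have hc : c ∈ weightFiltration R w (n - a) := hu.mem_of_mul_mem (by simpa using hcu)
  have hd : d ∈ weightFiltration R w (n - b) := hv.mem_of_mul_mem (by simpa using hdv)
  set Γ := weightedHomogeneousComponent w (n - a) c
  have hΓ : IsWeightedHomogeneous w Γ (n - a) :=
    weightedHomogeneousComponent_isWeightedHomogeneous ..
  have hcΓ : c - Γ ∈ weightFiltration R w (n - a + 1) := sub_weightedHomogeneousComponent_mem hc
  have hsyz := weightedHomogeneousComponent_mul_add_eq_zero hu hv hc hd h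
  obtain ⟨ε, hε⟩ : V ∣ Γ :=
    hUV.symm.dvd_of_dvd_mul_right ⟨-weightedHomogeneousComponent w (n - b) d, by
      linear_combination hsyz⟩
  have hεmem : ε ∈ weightFiltration R w (n - a - b) :=
    (HasInitialForm.self hv.isWeightedHomogeneous hv.ne_zero).mem_of_mul_mem <| by
      simpa [← mul_comm V ε, ← hε] using mem_weightFiltration_of_isWeightedHomogeneous hΓ
  have hcε : c - ε * v ∈ weightFiltration R w (n - a + 1) := by
    have hεv := mul_mem_weightFiltration hεmem hv.sub_mem_succ
    rw [← add_assoc, sub_add_cancel] at hεv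
    convert sub_mem hcΓ hεv using 1
    rw [hε]
    ring
  refine ⟨ε, ?_⟩
  have := mul_mem_weightFiltration hcε hu.mem
  rwa [add_right_comm, sub_add_cancel] at this

theorem exists_sub_mul_mem_and_add_mul_mem (hu : HasInitialForm w u a U)
    (hv : HasInitialForm w v b V) (hUV : IsRelPrime U V)
    (h : c * u + d * v ∈ weightFiltration R w n) :
    ∃ e, c - e * v ∈ weightFiltration R w (n - a) ∧ d + e * u ∈ weightFiltration R w (n - b) := by
  suffices ∃ e, (c - e * v) * u ∈ weightFiltration R w n by
    obtain ⟨e, he⟩ := this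
    refine ⟨e, hu.mem_of_mul_mem (by simpa using he), hv.mem_of_mul_mem ?_⟩
    rw [sub_add_cancel]
    convert sub_mem h he using 1
    ring
  obtain ⟨m, hm⟩ := exists_mem_weightFiltration w (c * u)
  rcases le_total n m with hnm | hmn
  · exact ⟨0, by simpa using weightFiltration_antitone hnm hm⟩
  induction n, hmn using Int.leInduction with
  | base => exact ⟨0, by simpa using hm⟩
  | succ n _ ih =>
    obtain ⟨e, he⟩ := ih (weightFiltration_antitone (by lia) h)
    obtain ⟨e', he'⟩ := exists_sub_mul_mul_mem_succ hu hv hUV he (d := d + e * u) <| by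
      convert h using 1
      ring
    exact ⟨e + e', by convert he' using 1; ring⟩

end Syzygy

end WeightFiltration

section EulerCharacteristic

open Module LinearMap

variable {K A B C D : Type*} [Field K] [AddCommGroup A] [Module K A] [AddCommGroup B] [Module K B]
  [AddCommGroup C] [Module K C] [AddCommGroup D] [Module K D] [FiniteDimensional K B]
  [FiniteDimensional K C] {f : A →ₗ[K] B} {g : B →ₗ[K] C} {h : C →ₗ[K] D}

theorem finrank_add_finrank_le_of_ker_le_range_of_surjective [FiniteDimensional K A]
    (hgf : ker g ≤ range f) (hhg : range g ≤ ker h)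
    (hsurj : Function.Surjective h) :
    finrank K D + finrank K B ≤ finrank K C + finrank K A := by
  have hB := finrank_range_add_finrank_ker g
  have hC := finrank_range_add_finrank_ker h
  rw [range_eq_top.mpr hsurj, finrank_top] at hC
  have hker := (Submodule.finrank_mono hgf).trans f.finrank_range_le
  have hrange := Submodule.finrank_mono hhg
  lia

theorem finrank_add_finrank_le_of_injective_of_ker_le_range [FiniteDimensional K D]
    (hinj : Function.Injective f) (hgf : range f ≤ ker g) (hhg : ker h ≤ range g) :
    finrank K C + finrank K A ≤ finrank K D + finrank K B := by
  have hB := finrank_range_add_finrank_ker g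
  have hC := finrank_range_add_finrank_ker h
  have hA := finrank_range_of_inj hinj
  have hker := Submodule.finrank_mono hgf
  have hrange := Submodule.finrank_mono hhg
  have hD := Submodule.finrank_le (range h)
  lia

end EulerCharacteristic

section Dimension

theorem isCompl_restrictSupport_compl {σ R : Type*} [CommRing R] (s : Set (σ →₀ ℕ)) :
    IsCompl (restrictSupport R s) (restrictSupport R sᶜ) := by
  classical
  constructor
  · rw [Submodule.disjoint_def]
    intro p hp hp'
    rw [mem_restrictSupport_iff] at hp hp'
    simpa using Set.disjoint_of_subset hp hp' disjoint_compl_right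
  · rw [codisjoint_iff, eq_top_iff]
    intro p _
    rw [p.as_sum]
    refine sum_mem fun m _ ↦ ?_
    by_cases hm : m ∈ s
    · exact Submodule.mem_sup_left (by simp [hm])
    · exact Submodule.mem_sup_right (by simp [hm])

theorem finrank_restrictSupport {σ K : Type*} [Field K] (s : Set (σ →₀ ℕ)) :
    Module.finrank K (restrictSupport K s) = s.ncard :=
  Module.finrank_eq_nat_card_basis (basisRestrictSupport K s)

theorem ncard_setOf_degree_lt (n : ℕ) :
    {s : Fin 2 →₀ ℕ | s.degree < n}.ncard = (n + 1).choose 2 := by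
  classical
  induction n with
  | zero => simp
  | succ n ih =>
    have hunion : {s : Fin 2 →₀ ℕ | s.degree < n + 1} =
        {s | s.degree < n} ∪ Finset.finsuppAntidiag (.univ : Finset (Fin 2)) n := by
      ext s
      simp [Finsupp.degree_eq_sum, Nat.le_iff_lt_or_eq]
    have hdisj : Disjoint {s : Fin 2 →₀ ℕ | s.degree < n}
        (Finset.finsuppAntidiag (.univ : Finset (Fin 2)) n) := by
      rw [Set.disjoint_left]
      intro s hs hs'
      simp_all [Finsupp.degree_eq_sum]
    rw [hunion, Set.ncard_union_eq hdisj (Finsupp.finite_of_degree_lt n) (Finset.finite_toSet _),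
      ih, Set.ncard_coe_finset, Finset.card_finsuppAntidiag_nat_eq_choose, Finset.card_univ,
      Fintype.card_fin, show 2 + n - 1 = n + 1 by lia, Nat.choose_succ_self_right,
      Nat.choose_succ_succ' (n + 1) 1, Nat.choose_one_right, add_comm]

theorem choose_two_add_choose_two (k a b : ℕ) :
    (k + a + b + 1).choose 2 + (k + 1).choose 2 =
      (k + a + 1).choose 2 + (k + b + 1).choose 2 + a * b := by
  rify
  simp only [Nat.cast_choose_two]
  push_cast
  ring

variable {σ : Type*} (n : ℕ)

theorem weight_one_eq_degree (s : σ →₀ ℕ) : Finsupp.weight (1 : σ → ℤ) s = s.degree := by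
  simp [Finsupp.weight_apply, Finsupp.degree_apply, Finsupp.sum]

theorem weight_neg_one_eq_neg_degree (s : σ →₀ ℕ) :
    Finsupp.weight (-1 : σ → ℤ) s = -s.degree := by
  simp [Finsupp.weight_apply, Finsupp.degree_apply, Finsupp.sum]

theorem isCompl_weightFiltration_one (R : Type*) [CommRing R] :
    IsCompl (weightFiltration R (1 : σ → ℤ) n) (restrictSupport R {s | s.degree < n}) := by
  convert isCompl_restrictSupport_compl {s : σ →₀ ℕ | n ≤ s.degree} using 1
  · simp only [weightFiltration, weight_one_eq_degree, Nat.cast_le]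
  · simp only [Set.compl_ofPred, not_le]

theorem weightFiltration_neg_one_neg (R : Type*) [CommRing R] :
    weightFiltration R (-1 : σ → ℤ) (-n) = restrictSupport R {s | s.degree < n + 1} := by
  simp only [weightFiltration, weight_neg_one_eq_neg_degree, neg_le_neg_iff, Nat.cast_le,
    Nat.lt_succ_iff]

variable {K : Type*} [Field K]

instance [Finite σ] : FiniteDimensional K (MvPolynomial σ K ⧸ weightFiltration K (1 : σ → ℤ) n) :=
  have : Finite {s : σ →₀ ℕ | s.degree < n} := Finsupp.finite_of_degree_lt n
  have := Module.Finite.of_basis (basisRestrictSupport K {s : σ →₀ ℕ | s.degree < n})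
  .equiv (Submodule.quotientEquivOfIsCompl _ _ (isCompl_weightFiltration_one n K)).symm

instance [Finite σ] : FiniteDimensional K (weightFiltration K (-1 : σ → ℤ) (-n)) := by
  rw [weightFiltration_neg_one_neg]
  have : Finite {s : σ →₀ ℕ | s.degree < n + 1} := Finsupp.finite_of_degree_lt (n + 1)
  exact Module.Finite.of_basis (basisRestrictSupport K _)

theorem finrank_quotient_weightFiltration_one :
    Module.finrank K (MvPolynomial (Fin 2) K ⧸ weightFiltration K (1 : Fin 2 → ℤ) n) =
      (n + 1).choose 2 := by
  rw [(Submodule.quotientEquivOfIsCompl _ _ (isCompl_weightFiltration_one n K)).finrank_eq,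
    finrank_restrictSupport, ncard_setOf_degree_lt]

theorem finrank_weightFiltration_neg_one :
    Module.finrank K (weightFiltration K (-1 : Fin 2 → ℤ) (-n)) = (n + 2).choose 2 := by
  rw [weightFiltration_neg_one_neg, finrank_restrictSupport, ncard_setOf_degree_lt]

end Dimension

section Koszul

open LinearMap

variable {σ R : Type*} [CommRing R] {w : σ → ℤ} {a b m n r : ℤ} {u v p U V : MvPolynomial σ R}

/-- Multiplication by `p`, of weight at least `n`, as a map between quotients by the weight
filtration. The target index is a separate variable to avoid casts between equal indices. -/
noncomputable def weightQuotientMul (hp : p ∈ weightFiltration R w n) (hr : m + n = r) :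
    (MvPolynomial σ R ⧸ weightFiltration R w m) →ₗ[R] MvPolynomial σ R ⧸ weightFiltration R w r :=
  Submodule.mapQ _ _ (mulRight R p) fun _ hq ↦ hr ▸ mul_mem_weightFiltration hq hp

theorem weightQuotientMul_mk (hp : p ∈ weightFiltration R w n) (hr : m + n = r)
    (q : MvPolynomial σ R) :
    weightQuotientMul hp hr (Submodule.Quotient.mk q) = Submodule.Quotient.mk (q * p) :=
  rfl

theorem ker_coprod_weightQuotientMul_le_range [IsDomain R] [DecompositionMonoid (MvPolynomial σ R)]
    (hu : HasInitialForm w u a U) (hv : HasInitialForm w v b V) (hUV : IsRelPrime U V)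
    {k : ℤ} (ha : k + a = m) (hb : k + b = n) (hmr : m + b = r) (hnr : n + a = r) :
    ker ((weightQuotientMul hu.mem hnr).coprod (weightQuotientMul hv.mem hmr)) ≤
      range ((weightQuotientMul hv.mem hb).prod (-weightQuotientMul hu.mem ha)) := by
  rintro ⟨x, y⟩ hxy
  obtain ⟨c, rfl⟩ := Submodule.Quotient.mk_surjective _ x
  obtain ⟨d, rfl⟩ := Submodule.Quotient.mk_surjective _ y
  rw [mem_ker, coprod_apply, weightQuotientMul_mk, weightQuotientMul_mk,
    ← Submodule.Quotient.mk_add, Submodule.Quotient.mk_eq_zero] at hxy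
  obtain ⟨e, hce, hde⟩ := exists_sub_mul_mem_and_add_mul_mem hu hv hUV hxy
  rw [← hnr, add_sub_cancel_right] at hce
  rw [← hmr, add_sub_cancel_right] at hde
  refine ⟨Submodule.Quotient.mk e, Prod.ext ?_ ?_⟩
  · exact ((Submodule.Quotient.eq _).mpr hce).symm
  · exact ((Submodule.Quotient.eq _).mpr (by rwa [sub_neg_eq_add])).symm

theorem range_coprod_weightQuotientMul_le_ker_factor {J : Ideal (MvPolynomial σ R)}
    (hu : u ∈ weightFiltration R w a) (hv : v ∈ weightFiltration R w b) (huJ : u ∈ J) (hvJ : v ∈ J)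
    (hmr : m + b = r) (hnr : n + a = r) :
    range ((weightQuotientMul hu hnr).coprod (weightQuotientMul hv hmr)) ≤
      ker (Submodule.factor (le_sup_right :
        weightFiltration R w r ≤ J.restrictScalars R ⊔ weightFiltration R w r)) := by
  rintro _ ⟨⟨x, y⟩, rfl⟩
  obtain ⟨c, rfl⟩ := Submodule.Quotient.mk_surjective _ x
  obtain ⟨d, rfl⟩ := Submodule.Quotient.mk_surjective _ y
  exact (Submodule.Quotient.mk_eq_zero _).mpr <| Submodule.mem_sup_left
    (J.add_mem (J.mul_mem_left c huJ) (J.mul_mem_left d hvJ))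

/-- Multiplication by `p`, of weight at least `n`, as a map between steps of the weight filtration.
The target index is a separate variable to avoid casts between equal indices. -/
noncomputable def weightFiltrationMul (hp : p ∈ weightFiltration R w n) (hr : m + n = r) :
    weightFiltration R w m →ₗ[R] weightFiltration R w r :=
  (mulRight R p).restrict fun _ hq ↦ hr ▸ mul_mem_weightFiltration hq hp

theorem injective_weightFiltrationMul [IsDomain R] (hp : p ∈ weightFiltration R w n)
    (hp0 : p ≠ 0) (hr : m + n = r) : Function.Injective (weightFiltrationMul hp hr) :=
  fun _ _ hq ↦ Subtype.ext (mul_right_cancel₀ hp0 (congrArg Subtype.val hq))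

theorem range_prod_weightFiltrationMul_le_ker (hu : u ∈ weightFiltration R w a)
    (hv : v ∈ weightFiltration R w b) {k : ℤ} (ha : k + a = m) (hb : k + b = n)
    (hmr : m + b = r) (hnr : n + a = r) :
    range ((weightFiltrationMul hv hb).prod (-weightFiltrationMul hu ha)) ≤
      ker ((weightFiltrationMul hu hnr).coprod (weightFiltrationMul hv hmr)) := by
  rintro _ ⟨⟨e, he⟩, rfl⟩
  refine Subtype.ext ?_
  change e * v * u + -(e * u) * v = 0
  ring

theorem ker_mk_comp_subtype_le_range_coprod [IsDomain R]
    [DecompositionMonoid (MvPolynomial σ R)] (hu : HasInitialForm w u a U)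
    (hv : HasInitialForm w v b V) (hUV : IsRelPrime U V) (hmr : m + b = r) (hnr : n + a = r) :
    ker ((Ideal.Quotient.mkₐ R (Ideal.span {u, v})).toLinearMap ∘ₗ
      (weightFiltration R w r).subtype) ≤
      range ((weightFiltrationMul hu.mem hnr).coprod (weightFiltrationMul hv.mem hmr)) := by
  rintro ⟨p, hp⟩ hpker
  obtain ⟨c, d, rfl⟩ := Ideal.mem_span_pair.mp (Ideal.Quotient.eq_zero_iff_mem.mp hpker)
  obtain ⟨e, hc, hd⟩ := exists_sub_mul_mem_and_add_mul_mem hu hv hUV hp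
  rw [← hnr, add_sub_cancel_right] at hc
  rw [← hmr, add_sub_cancel_right] at hd
  refine ⟨⟨⟨_, hc⟩, ⟨_, hd⟩⟩, Subtype.ext ?_⟩
  change (c - e * v) * u + (d + e * u) * v = c * u + d * v
  ring

end Koszul

section IntersectionBounds

open LinearMap

variable {K : Type*} [Field K] {u v U V : MvPolynomial (Fin 2) K} {a b : ℕ}
  {J : Ideal (MvPolynomial (Fin 2) K)}

theorem finrank_quotient_sup_weightFiltration_add_le (hu : HasInitialForm 1 u a U)
    (hv : HasInitialForm 1 v b V) (hUV : IsRelPrime U V) (huJ : u ∈ J) (hvJ : v ∈ J) (k : ℕ) :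
    Module.finrank K (MvPolynomial (Fin 2) K ⧸
      (J.restrictScalars K ⊔ weightFiltration K 1 (k + a + b : ℕ))) ≤ a * b := by
  have ha : (k : ℤ) + a = (k + a : ℕ) := by simp
  have hb : (k : ℤ) + b = (k + b : ℕ) := by simp
  have hab : ((k + a : ℕ) : ℤ) + b = (k + a + b : ℕ) := by simp
  have hba : ((k + b : ℕ) : ℤ) + a = (k + a + b : ℕ) := by lia
  have hEuler := finrank_add_finrank_le_of_ker_le_range_of_surjective
    (ker_coprod_weightQuotientMul_le_range hu hv hUV ha hb hab hba)
    (range_coprod_weightQuotientMul_le_ker_factor hu.mem hv.mem huJ hvJ hab hba)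
    (Submodule.factor_surjective _)
  simp only [Module.finrank_prod, finrank_quotient_weightFiltration_one] at hEuler
  have := choose_two_add_choose_two k a b
  lia

theorem finrank_quotient_sup_weightFiltration_le (hu : HasInitialForm 1 u a U)
    (hv : HasInitialForm 1 v b V) (hUV : IsRelPrime U V) (huJ : u ∈ J) (hvJ : v ∈ J) (k : ℕ) :
    Module.finrank K (MvPolynomial (Fin 2) K ⧸
      (J.restrictScalars K ⊔ weightFiltration K 1 k)) ≤ a * b := by
  refine le_trans ?_ (finrank_quotient_sup_weightFiltration_add_le hu hv hUV huJ hvJ k)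
  have hle : weightFiltration K (1 : Fin 2 → ℤ) (k + a + b : ℕ) ≤ weightFiltration K 1 k :=
    weightFiltration_antitone (by lia)
  have : FiniteDimensional K (MvPolynomial (Fin 2) K ⧸
      (J.restrictScalars K ⊔ weightFiltration K 1 (k + a + b : ℕ))) :=
    .of_surjective (Submodule.factor le_sup_right) (Submodule.factor_surjective _)
  exact (Submodule.factor (sup_le_sup_left hle _)).finrank_le_finrank_of_surjective
    (Submodule.factor_surjective _)

theorem mul_le_finrank_quotient (hu : HasInitialForm (-1) u (-a) U)
    (hv : HasInitialForm (-1) v (-b) V) (hUV : IsRelPrime U V)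
    [FiniteDimensional K (MvPolynomial (Fin 2) K ⧸ Ideal.span {u, v})] :
    a * b ≤ Module.finrank K (MvPolynomial (Fin 2) K ⧸ Ideal.span {u, v}) := by
  have ha : (0 : ℤ) + -a = -a := zero_add _
  have hb : (0 : ℤ) + -b = -b := zero_add _
  have hab : -(a : ℤ) + -b = -(a + b : ℕ) := by lia
  have hba : -(b : ℤ) + -a = -(a + b : ℕ) := by lia
  have hinj : Function.Injective
      ((weightFiltrationMul hv.mem hb).prod (-weightFiltrationMul hu.mem ha)) := fun _ _ h ↦
    injective_weightFiltrationMul hv.mem hv.left_ne_zero hb (congrArg Prod.fst h)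
  have hEuler := finrank_add_finrank_le_of_injective_of_ker_le_range hinj
    (range_prod_weightFiltrationMul_le_ker hu.mem hv.mem ha hb hab hba)
    (ker_mk_comp_subtype_le_range_coprod hu hv hUV hab hba)
  have hone : Module.finrank K (weightFiltration K (-1 : Fin 2 → ℤ) 0) = 1 := by
    simpa using finrank_weightFiltration_neg_one (K := K) 0
  rw [Module.finrank_prod, hone] at hEuler
  simp only [finrank_weightFiltration_neg_one] at hEuler
  have := choose_two_add_choose_two 1 a b
  rw [Nat.choose_self, add_comm 1 a, add_comm 1 b, add_right_comm a 1 b] at this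
  lia

end IntersectionBounds

section ChineseRemainder

variable {ι A : Type*} [CommRing A]

theorem prod_sup_le_sup_prod (I : Ideal A) (s : Finset ι) (M : ι → Ideal A) :
    ∏ i ∈ s, (I ⊔ M i) ≤ I ⊔ ∏ i ∈ s, M i := by
  classical
  induction s using Finset.induction_on with
  | empty => simp
  | insert i s hi ih =>
    rw [Finset.prod_insert hi, Finset.prod_insert hi]
    refine (Ideal.mul_mono_right ih).trans ?_
    rw [Ideal.sup_mul, Ideal.mul_sup (M i)]
    exact sup_le (le_sup_of_le_left Ideal.mul_le_left)
      (sup_le (le_sup_of_le_left Ideal.mul_le_right) le_sup_right)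

theorem iInf_sup_eq_of_prod_le {I : Ideal A} {s : Finset ι} {M : ι → Ideal A}
    (hM : (s : Set ι).Pairwise (Function.onFun IsCoprime M)) (hI : ∏ i ∈ s, M i ≤ I) :
    ⨅ i : s, (I ⊔ M i) = I := by
  refine le_antisymm ?_ (le_iInf fun _ ↦ le_sup_left)
  have hcop : (s : Set ι).Pairwise (Function.onFun IsCoprime fun i ↦ I ⊔ M i) := fun i hi j hj hij ↦
    Ideal.isCoprime_iff_sup_eq.mpr <| top_le_iff.mp <|
      (Ideal.isCoprime_iff_sup_eq.mp (hM hi hj hij)).ge.trans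
        (sup_le_sup le_sup_right le_sup_right)
  rw [iInf_subtype, ← Ideal.prod_eq_iInf_of_pairwise_isCoprime hcop]
  exact (prod_sup_le_sup_prod I s M).trans (sup_le le_rfl hI)

theorem finrank_quotient_le_sum_of_prod_le {K : Type*} [Field K] [Algebra K A] {I : Ideal A}
    {s : Finset ι} {M : ι → Ideal A} (hM : (s : Set ι).Pairwise (Function.onFun IsCoprime M))
    (hI : ∏ i ∈ s, M i ≤ I) (hfin : ∀ i ∈ s, FiniteDimensional K (A ⧸ I ⊔ M i)) :
    FiniteDimensional K (A ⧸ I) ∧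
      Module.finrank K (A ⧸ I) ≤ ∑ i ∈ s, Module.finrank K (A ⧸ I ⊔ M i) := by
  let φ : (A ⧸ I) →ₗ[K] (i : s) → A ⧸ I ⊔ M i :=
    LinearMap.pi fun i ↦ (Ideal.Quotient.factorₐ K (le_sup_left : I ≤ I ⊔ M i)).toLinearMap
  have hφ : Function.Injective φ := by
    rw [injective_iff_map_eq_zero]
    intro x hx
    obtain ⟨a, rfl⟩ := Ideal.Quotient.mk_surjective x
    rw [Ideal.Quotient.eq_zero_iff_mem, ← iInf_sup_eq_of_prod_le hM hI, Ideal.mem_iInf]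
    exact fun i ↦ Ideal.Quotient.eq_zero_iff_mem.mp (congrFun hx i)
  have (i : s) : FiniteDimensional K (A ⧸ I ⊔ M i) := hfin i i.2
  refine ⟨.of_injective φ hφ, (LinearMap.finrank_le_finrank_of_injective hφ).trans ?_⟩
  rw [Module.finrank_pi_fintype, Finset.sum_coe_sort s fun i ↦ Module.finrank K (A ⧸ I ⊔ M i)]

end ChineseRemainder

section Points

variable {σ : Type*}

/-- The automorphism of the polynomial ring that moves the point `P` to the origin. -/
noncomputable def translateAlgEquiv {R : Type*} [CommRing R] (P : σ → R) :
    MvPolynomial σ R ≃ₐ[R] MvPolynomial σ R :=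
  .ofAlgHom (aeval fun i ↦ X i + C (P i)) (aeval fun i ↦ X i - C (P i))
    (by ext; simp) (by ext; simp)

theorem translateAlgEquiv_X {R : Type*} [CommRing R] (P : σ → R) (i : σ) :
    translateAlgEquiv P (X i) = X i + C (P i) :=
  aeval_X _ _

theorem constantCoeff_translateAlgEquiv {R : Type*} [CommRing R] (P : σ → R)
    (p : MvPolynomial σ R) :
    constantCoeff (translateAlgEquiv P p) = eval P p := by
  induction p using MvPolynomial.induction_on with
  | C r => rw [← algebraMap_eq, AlgEquiv.commutes, algebraMap_eq, constantCoeff_C, eval_C]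
  | add p q hp hq => simp only [map_add, hp, hq]
  | mul_X p i hp => simp [hp, translateAlgEquiv_X]

theorem restrictScalars_idealOfVars_pow (R : Type*) [CommRing R] (k : ℕ) :
    (idealOfVars σ R ^ k).restrictScalars R = weightFiltration R 1 k := by
  ext p
  simp only [Submodule.restrictScalars_mem, mem_pow_idealOfVars_iff, mem_weightFiltration,
    mem_support_iff, weight_one_eq_degree, Nat.cast_le]

variable {K : Type*} [Field K]

theorem map_translateAlgEquiv_vanishingIdeal (P : σ → K) :
    (vanishingIdeal K {P}).map (translateAlgEquiv P) = idealOfVars σ K := by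
  have hmem (p : MvPolynomial σ K) : p ∈ idealOfVars σ K ↔ constantCoeff p = 0 := by
    rw [← pow_one (idealOfVars σ K), mem_pow_idealOfVars_iff']
    simp [Finsupp.degree_eq_zero_iff, constantCoeff_eq]
  ext p
  obtain ⟨p, rfl⟩ := (translateAlgEquiv P).surjective p
  rw [hmem, constantCoeff_translateAlgEquiv, ← coe_aeval_eq_eval]
  exact (Ideal.mem_map_of_equiv (translateAlgEquiv P) _).trans (by simp)

/-- Moving `P` to the origin identifies the truncation at order `k` of the local ring of `I` at `P`
with a truncation by the weight filtration. -/
noncomputable def quotientSupVanishingIdealPowEquiv (I : Ideal (MvPolynomial σ K)) (P : σ → K)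
    (k : ℕ) : (MvPolynomial σ K ⧸ I ⊔ vanishingIdeal K {P} ^ k) ≃ₗ[K]
      MvPolynomial σ K ⧸
        ((I.map (translateAlgEquiv P)).restrictScalars K ⊔ weightFiltration K 1 k) :=
  (Ideal.quotientEquivAlg _ (I.map (translateAlgEquiv P) ⊔ idealOfVars σ K ^ k)
    (translateAlgEquiv P) (((Ideal.map_sup (translateAlgEquiv P) _ _).trans (by
      rw [Ideal.map_pow, map_translateAlgEquiv_vanishingIdeal])).symm)).toLinearEquiv ≪≫ₗ
  (Submodule.Quotient.restrictScalarsEquiv K _).symm ≪≫ₗ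
  Submodule.quotEquivOfEq _ _ (by
    rw [Submodule.restrictScalars_sup, restrictScalars_idealOfVars_pow])

theorem finrank_quotient_le_sum_of_zeroLocus_subset [Finite σ] [IsAlgClosed K]
    {I : Ideal (MvPolynomial σ K)} {S : Finset (σ → K)} {c : (σ → K) → ℕ} (hS : zeroLocus K I ⊆ S)
    (hc : ∀ P ∈ S, ∀ k : ℕ, Module.finrank K (MvPolynomial σ K ⧸
      ((I.map (translateAlgEquiv P)).restrictScalars K ⊔ weightFiltration K 1 k)) ≤ c P) :
    FiniteDimensional K (MvPolynomial σ K ⧸ I) ∧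
      Module.finrank K (MvPolynomial σ K ⧸ I) ≤ ∑ P ∈ S, c P := by
  have hrad : ∏ P ∈ S, vanishingIdeal K {P} ≤ I.radical := by
    rw [← vanishingIdeal_zeroLocus_eq_radical (K := K)]
    exact Ideal.prod_le_inf.trans fun p hp P hP ↦ (mem_vanishingIdeal_singleton_iff P p).mp <|
      Finset.inf_le (f := fun P ↦ vanishingIdeal K {P}) (hS hP) hp
  obtain ⟨k, hk⟩ := Ideal.exists_pow_le_of_le_radical_of_fg hrad (IsNoetherian.noetherian _)
  rw [← Finset.prod_pow] at hk
  have hcop : (S : Set (σ → K)).Pairwise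
      (Function.onFun IsCoprime fun P ↦ vanishingIdeal K {P} ^ k) := fun P _ Q _ hPQ ↦
    (Ideal.isCoprime_of_isMaximal fun h ↦ hPQ <| by
      ext i
      have hi : X i - C (P i) ∈ vanishingIdeal K {Q} :=
        h ▸ (mem_vanishingIdeal_singleton_iff P _).mpr (by simp)
      simpa [sub_eq_zero, eq_comm] using (mem_vanishingIdeal_singleton_iff Q _).mp hi).pow
  obtain ⟨hfin, hle⟩ := finrank_quotient_le_sum_of_prod_le (K := K) hcop hk fun P _ ↦
    have : FiniteDimensional K (MvPolynomial σ K ⧸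
        ((I.map (translateAlgEquiv P)).restrictScalars K ⊔ weightFiltration K 1 k)) :=
      .of_surjective (Submodule.factor le_sup_right) (Submodule.factor_surjective _)
    (quotientSupVanishingIdealPowEquiv I P k).symm.finiteDimensional
  exact ⟨hfin, hle.trans <| Finset.sum_le_sum fun P hP ↦
    (quotientSupVanishingIdealPowEquiv I P k).finrank_eq.trans_le (hc P hP k)⟩

end Points

section Bezout

variable {K : Type*} [Field K] [IsAlgClosed K] {u v U V : MvPolynomial (Fin 2) K} {m n : ℕ}

theorem mul_le_sum_mul_of_hasInitialForm {S : Finset (Fin 2 → K)} {a b : (Fin 2 → K) → ℕ}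
    (hu : HasInitialForm (-1) u (-m) U) (hv : HasInitialForm (-1) v (-n) V) (hUV : IsRelPrime U V)
    (hS : ∀ P, eval P u = 0 → eval P v = 0 → P ∈ S)
    (hloc : ∀ P ∈ S, ∃ A B, HasInitialForm 1 (translateAlgEquiv P u) (a P) A ∧
      HasInitialForm 1 (translateAlgEquiv P v) (b P) B ∧ IsRelPrime A B) :
    m * n ≤ ∑ P ∈ S, a P * b P := by
  have hzero : zeroLocus K (Ideal.span {u, v}) ⊆ S := by
    rw [zeroLocus_span]
    exact fun P hP ↦ hS P (hP u (by simp)) (hP v (by simp))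
  obtain ⟨hfin, hle⟩ := finrank_quotient_le_sum_of_zeroLocus_subset hzero fun P hP k ↦ by
    obtain ⟨A, B, hA, hB, hAB⟩ := hloc P hP
    exact finrank_quotient_sup_weightFiltration_le hA hB hAB
      (Ideal.mem_map_of_mem _ (Ideal.subset_span (by simp)))
      (Ideal.mem_map_of_mem _ (Ideal.subset_span (by simp))) k
  exact (mul_le_finrank_quotient hu hv hUV).trans hle

end Bezout

section Forms

section CommRing

variable {σ R : Type*} [CommRing R]

theorem mem_weightFiltration_neg_one_neg {d : ℕ} {p : MvPolynomial σ R} :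
    p ∈ weightFiltration R (-1) (-d) ↔ p.totalDegree ≤ d := by
  simp only [mem_weightFiltration, weight_neg_one_eq_neg_degree, neg_le_neg_iff, Nat.cast_le,
    totalDegree, Finset.sup_le_iff, mem_support_iff, Finsupp.degree_apply, Finsupp.sum]

theorem exists_hasInitialForm_neg_totalDegree {p : MvPolynomial σ R} (hp : p ≠ 0) :
    ∃ F, HasInitialForm (-1) p (-p.totalDegree) F := by
  obtain ⟨n, F, hF⟩ := HasInitialForm.exists_of_ne_zero (-1) hp
  obtain ⟨s, hs, hdeg⟩ := p.support.exists_mem_eq_sup (support_nonempty.mpr hp) Finsupp.degree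
  have hle : n ≤ -p.totalDegree := by
    have htot : p.totalDegree = s.degree := hdeg
    rw [htot, ← weight_neg_one_eq_neg_degree]
    exact mem_weightFiltration.mp hF.mem s (mem_support_iff.mp hs)
  obtain rfl := hle.antisymm (hF.le_of_mem (mem_weightFiltration_neg_one_neg.mpr le_rfl))
  exact ⟨F, hF⟩

theorem mem_weightFiltration_one_zero (p : MvPolynomial σ R) : p ∈ weightFiltration R 1 0 :=
  mem_weightFiltration.mpr fun s _ ↦ by simp [weight_one_eq_degree]

theorem exists_hasInitialForm_order {p : MvPolynomial σ R} (hp : p ≠ 0) :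
    ∃ (n : ℕ) (F : MvPolynomial σ R), HasInitialForm 1 p n F := by
  obtain ⟨n, F, hF⟩ := HasInitialForm.exists_of_ne_zero 1 hp
  have hn : 0 ≤ n := hF.le_of_mem (mem_weightFiltration_one_zero p)
  lift n to ℕ using hn
  exact ⟨n, F, hF⟩

theorem exists_eq_mul_add_mul_of_sub_mem {w : σ → ℤ} {m n : ℤ} {u v U V G : MvPolynomial σ R}
    (hu : HasInitialForm w u m U) (hv : HasInitialForm w v n V)
    (hG : IsWeightedHomogeneous w G (m + n + 1))
    (h : u * v - U * V - G ∈ weightFiltration R w (m + n + 2)) : ∃ A B, G = U * B + A * V := by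
  set A := weightedHomogeneousComponent w (m + 1) (u - U)
  set B := weightedHomogeneousComponent w (n + 1) (v - V)
  have hA : IsWeightedHomogeneous w A (m + 1) :=
    weightedHomogeneousComponent_isWeightedHomogeneous ..
  have hB : IsWeightedHomogeneous w B (n + 1) :=
    weightedHomogeneousComponent_isWeightedHomogeneous ..
  have hUB := hu.isWeightedHomogeneous.mul hB
  have hAV := hA.mul hv.isWeightedHomogeneous
  rw [← add_assoc] at hUB
  rw [add_right_comm] at hAV
  refine ⟨A, B, sub_eq_zero.mp
    (eq_zero_of_isWeightedHomogeneous_of_mem (hG.sub (hUB.add hAV)) ?_)⟩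
  have h₁ : (u - U - A) * v ∈ weightFiltration R w (m + n + 1 + 1) := by
    convert mul_mem_weightFiltration
      (sub_weightedHomogeneousComponent_mem hu.sub_mem_succ) hv.mem using 2
    ring
  have h₂ : U * (v - V - B) ∈ weightFiltration R w (m + n + 1 + 1) := by
    convert mul_mem_weightFiltration
      (mem_weightFiltration_of_isWeightedHomogeneous hu.isWeightedHomogeneous)
      (sub_weightedHomogeneousComponent_mem hv.sub_mem_succ) using 2
    ring
  have h₃ : A * (v - V) ∈ weightFiltration R w (m + n + 1 + 1) := by
    convert mul_mem_weightFiltration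
      (mem_weightFiltration_of_isWeightedHomogeneous hA) hv.sub_mem_succ using 2
    ring
  rw [show m + n + 2 = m + n + 1 + 1 by ring] at h
  convert sub_mem (add_mem (add_mem h₁ h₂) h₃) h using 1
  ring

theorem dvd_pderiv_of_mul_self_dvd {D F : MvPolynomial σ R} (i : σ) (h : D * D ∣ F) :
    D ∣ pderiv i F := by
  obtain ⟨E, rfl⟩ := h
  refine ⟨2 * pderiv i D * E + D * pderiv i E, ?_⟩
  simp only [pderiv_mul]
  ring

theorem squarefree_of_isRelPrime_pderiv {F : MvPolynomial σ R} {i j : σ}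
    (h : IsRelPrime (pderiv i F) (pderiv j F)) : Squarefree F :=
  fun _ hD ↦ h (dvd_pderiv_of_mul_self_dvd i hD) (dvd_pderiv_of_mul_self_dvd j hD)

theorem isRelPrime_X_X [IsDomain R] {i j : σ} (hij : i ≠ j) :
    IsRelPrime (X i : MvPolynomial σ R) (X j) :=
  X_prime.irreducible.isRelPrime_iff_not_dvd.mpr (by simpa [X_dvd_X] using hij)

theorem isRelPrime_C_mul_add_C_mul {x y : MvPolynomial σ R} (h : IsRelPrime x y) {a b c d : R}
    (hdet : IsUnit (a * d - b * c)) : IsRelPrime (C a * x + C b * y) (C c * x + C d * y) := by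
  intro D h₁ h₂
  have hunit : IsUnit (C (a * d - b * c) : MvPolynomial σ R) := hdet.map C
  refine h (hunit.dvd_mul_left.mp ?_) (hunit.dvd_mul_left.mp ?_)
  · convert dvd_sub (h₁.mul_left (C d)) (h₂.mul_left (C b)) using 1
    simp only [map_sub, map_mul]
    ring
  · convert dvd_sub (h₂.mul_left (C a)) (h₁.mul_left (C c)) using 1
    simp only [map_sub, map_mul]
    ring

/-- The binary form `a x ^ n + b y ^ n + c (x + y) ^ n`, the shape of both the leading form of `f_t`
and its tangent cones at singular points. -/
noncomputable def powerForm (n : ℕ) (a b c : R) : MvPolynomial (Fin 2) R :=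
  C a * X 0 ^ n + C b * X 1 ^ n + C c * (X 0 + X 1) ^ n

theorem isWeightedHomogeneous_powerForm {w : Fin 2 → ℤ} (hw : w 1 = w 0) (n : ℕ) (a b c : R) :
    IsWeightedHomogeneous w (powerForm n a b c) (n * w 0) := by
  have h0 := isWeightedHomogeneous_X R w 0
  have h1 := isWeightedHomogeneous_X R w 1
  rw [hw] at h1
  rw [← nsmul_eq_mul]
  exact (((h0.pow n).C_mul a).add ((h1.pow n).C_mul b)).add (((h0.add h1).pow n).C_mul c)

theorem pderiv_zero_powerForm (n : ℕ) (a b c : R) :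
    pderiv 0 (powerForm (n + 1) a b c) = C (n + 1 : R) * powerForm n a 0 c := by
  simp only [powerForm, map_add, pderiv_C_mul, pderiv_pow, pderiv_X_self, C_0, C_1, map_natCast,
    Nat.add_sub_cancel, Nat.cast_succ, pderiv_X_of_ne one_ne_zero]
  ring

theorem pderiv_one_powerForm (n : ℕ) (a b c : R) :
    pderiv 1 (powerForm (n + 1) a b c) = C (n + 1 : R) * powerForm n 0 b c := by
  simp only [powerForm, map_add, pderiv_C_mul, pderiv_pow, pderiv_X_self, C_0, C_1, map_natCast,
    Nat.add_sub_cancel, Nat.cast_succ, pderiv_X_of_ne zero_ne_one]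
  ring

end CommRing

variable {K : Type*} [Field K] [CharP K 2]

theorem powerForm_two_pow (i : ℕ) (a b c : K) :
    powerForm (2 ^ i) a b c = C (a + c) * X 0 ^ 2 ^ i + C (b + c) * X 1 ^ 2 ^ i := by
  rw [powerForm, add_pow_char_pow, map_add, map_add]
  ring

theorem squarefree_powerForm {i : ℕ} (hi : i ≠ 0) {a b c : K} (h : a * b + b * c + c * a ≠ 0) :
    Squarefree (powerForm (2 ^ i + 1) a b c) := by
  have hcast : (((2 ^ i : ℕ) : K) + 1) = 1 := by simp [hi, CharTwo.two_eq_zero]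
  refine squarefree_of_isRelPrime_pderiv (i := 0) (j := 1) ?_
  rw [pderiv_zero_powerForm, pderiv_one_powerForm, hcast, C_1, one_mul, one_mul,
    powerForm_two_pow, powerForm_two_pow]
  refine isRelPrime_C_mul_add_C_mul (isRelPrime_X_X zero_ne_one).pow (Ne.isUnit ?_)
  convert h using 1
  ring

theorem isRelPrime_of_mul_eq_powerForm {n : ℕ} (hn : Even n) {U V A B : MvPolynomial (Fin 2) K}
    (hUV : U * V = powerForm (n + 1) 1 1 1) (hAB : powerForm n 0 0 1 = U * B + A * V) :
    IsRelPrime U V := by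
  intro D hU hV
  have hsum : D ∣ (X 0 + X 1) ^ n := by
    have : D ∣ powerForm n 0 0 1 := hAB ▸ (hU.mul_right B).add (hV.mul_left A)
    simpa [powerForm] using this
  have hderiv : D ∣ X 0 ^ n + (X 0 + X 1) ^ n := by
    have := dvd_pderiv_of_mul_self_dvd 0 (hUV ▸ mul_dvd_mul hU hV)
    rw [pderiv_zero_powerForm] at this
    simpa [powerForm, (CharP.cast_eq_zero_iff K 2 n).mpr hn.two_dvd] using this
  have hcoprime : IsRelPrime (X 0 : MvPolynomial (Fin 2) K) (X 0 + X 1) :=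
    .of_mul_add_left_right (z := -1) (by simpa using isRelPrime_X_X zero_ne_one)
  exact (hcoprime.pow (m := n) (n := n)) ((dvd_add_left hsum).mp hderiv) hsum

end Forms

section SingularPoints

theorem exists_mem_add_notMem {R : Type*} [CommRing R] [NoZeroDivisors R] {s : Finset R}
    (hs : (s.card : R) ≠ 0) {a : R} (ha : a ≠ 0) : ∃ y ∈ s, y + a ∉ s := by
  by_contra! h
  have hmap : s.map (addRightEmbedding a) = s :=
    Finset.eq_of_subset_of_card_le (Finset.map_subset_iff_subset_preimage.mpr
      fun y hy ↦ by simpa using h y hy) (Finset.card_map _).ge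
  have hsum : ∑ y ∈ s, (y + a) = ∑ y ∈ s, y := by
    conv_rhs => rw [← hmap, Finset.sum_map]
    rfl
  rw [Finset.sum_add_distrib, add_eq_left, Finset.sum_const, nsmul_eq_mul] at hsum
  exact mul_ne_zero hs ha hsum

variable (K : Type*) [Field K] (l : ℕ)

open Classical in
/-- The points such that `x`, `y` and `x + y + 1` are `l`-th roots of unity: the singular points
of `f_t`. -/
noncomputable def singularPoints : Finset (Fin 2 → K) :=
  ((Polynomial.nthRootsFinset l (1 : K)).sigma fun x ↦
    (Polynomial.nthRootsFinset l (1 : K)).filter fun y ↦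
      x + y + 1 ∈ Polynomial.nthRootsFinset l (1 : K)).image fun p ↦ ![p.1, p.2]

variable {K l}

theorem mem_singularPoints (hl : 0 < l) {P : Fin 2 → K} :
    P ∈ singularPoints K l ↔ P 0 ^ l = 1 ∧ P 1 ^ l = 1 ∧ (P 0 + P 1 + 1) ^ l = 1 := by
  simp only [singularPoints, Finset.mem_image, Finset.mem_sigma, Finset.mem_filter,
    Polynomial.mem_nthRootsFinset hl]
  constructor
  · rintro ⟨p, hp, rfl⟩
    exact hp
  · exact fun hP ↦ ⟨⟨P 0, P 1⟩, hP, by ext j; fin_cases j <;> rfl⟩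

theorem card_singularPoints_add_le [IsAlgClosed K] [CharP K 2] (hl : Odd l) :
    (singularPoints K l).card + l ≤ l * l + 1 := by
  classical
  have hcast : (l : K) = 1 := by
    rw [CharTwo.natCast_eq_ite, if_neg (Nat.not_even_iff_odd.mpr hl)]
  have : NeZero (l : K) := ⟨by simp [hcast]⟩
  obtain ⟨ζ, hζ⟩ := HasEnoughRootsOfUnity.exists_primitiveRoot K l
  set μ := Polynomial.nthRootsFinset l (1 : K)
  have hμ : μ.card = l := hζ.card_nthRootsFinset
  let fiber (x : K) : Finset K := {y ∈ μ | x + y + 1 ∈ μ}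
  have hfiber : ∀ x ∈ μ.erase 1, (fiber x).card ≤ l - 1 := by
    intro x hx
    have hx1 : x + 1 ≠ 0 := by
      simpa [CharTwo.add_eq_zero] using Finset.ne_of_mem_erase hx
    obtain ⟨y, hy, hyx⟩ := exists_mem_add_notMem (by simp [hμ, hcast] : (μ.card : K) ≠ 0) hx1
    have : (fiber x).card < μ.card := Finset.card_lt_card <|
      Finset.filter_ssubset.mpr ⟨y, hy, by rwa [add_right_comm, add_comm (x + 1)]⟩
    lia
  have hone : 1 ∈ μ := (Polynomial.mem_nthRootsFinset hl.pos 1).mpr (one_pow l)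
  have hle := calc (singularPoints K l).card
    _ ≤ ∑ x ∈ μ, (fiber x).card := Finset.card_image_le.trans (Finset.card_sigma _ _).le
    _ = (fiber 1).card + ∑ x ∈ μ.erase 1, (fiber x).card := (Finset.add_sum_erase _ _ hone).symm
    _ ≤ l + (μ.erase 1).card * (l - 1) :=
      add_le_add (hμ ▸ Finset.card_filter_le _ _) (Finset.sum_le_card_nsmul _ _ _ hfiber)
    _ = l + (l - 1) * (l - 1) := by rw [Finset.card_erase_of_mem hone, hμ]
  obtain ⟨k, rfl⟩ := Nat.exists_eq_add_of_le' hl.pos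
  rw [Nat.add_sub_cancel] at hle
  linarith

end SingularPoints

/-- The polynomial `f_t`, whose zeros off the lines `x = 1`, `y = 1` and `x = y` obstruct the
almost perfect nonlinearity of `x ↦ x ^ t`. -/
noncomputable def apnPolynomial (R : Type*) [CommRing R] (t : ℕ) : MvPolynomial (Fin 2) R :=
  X 0 ^ t + X 1 ^ t + 1 + (X 0 + X 1 + 1) ^ t

section AtInfinity

variable {σ R : Type*} [CommRing R]

theorem add_one_pow_sub_mem_weightFiltration {w : σ → ℤ} {z : MvPolynomial σ R}
    (hz : z ∈ weightFiltration R w (-1)) (n : ℕ) :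
    (z + 1) ^ (n + 1) - z ^ (n + 1) - (n + 1) * z ^ n ∈ weightFiltration R w (-n + 1) := by
  have hexp : (z + 1) ^ (n + 1) - z ^ (n + 1) - (n + 1) * z ^ n =
      ∑ k ∈ Finset.range n, (n + 1).choose k • z ^ k := by
    rw [add_pow, Finset.sum_range_succ, Finset.sum_range_succ, Nat.choose_self,
      Nat.choose_succ_self_right]
    simp only [one_pow, mul_one, nsmul_eq_mul, Nat.cast_succ, Nat.cast_comm]
    ring
  rw [hexp]
  refine sum_mem fun k hk ↦ nsmul_mem ?_ _
  refine weightFiltration_antitone ?_ (pow_mem_weightFiltration hz k)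
  have := Finset.mem_range.mp hk
  lia

variable {K : Type*} [Field K] [CharP K 2] {n : ℕ}

theorem apnPolynomial_sub_powerForm_mem (hn : Even n) (hn0 : n ≠ 0) :
    apnPolynomial K (n + 1) - powerForm (n + 1) 1 1 1 - powerForm n 0 0 1 ∈
      weightFiltration K (-1) (-n + 1) := by
  have hz : (X 0 + X 1 : MvPolynomial (Fin 2) K) ∈ weightFiltration K (-1) (-1) :=
    add_mem (mem_weightFiltration_of_isWeightedHomogeneous (isWeightedHomogeneous_X K _ 0))
      (mem_weightFiltration_of_isWeightedHomogeneous (isWeightedHomogeneous_X K _ 1))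
  have hone : (1 : MvPolynomial (Fin 2) K) ∈ weightFiltration K (-1) (-n + 1) :=
    weightFiltration_antitone (by lia) one_mem_weightFiltration
  have hcast : (n : MvPolynomial (Fin 2) K) = 0 := by
    rw [CharTwo.natCast_eq_ite, if_pos hn]
  convert add_mem (add_one_pow_sub_mem_weightFiltration hz n) hone using 1
  rw [hcast, apnPolynomial, powerForm, powerForm, C_0, C_1]
  ring

theorem hasInitialForm_apnPolynomial (hn : Even n) (hn0 : n ≠ 0) :
    HasInitialForm (-1) (apnPolynomial K (n + 1)) (-(n + 1 : ℕ)) (powerForm (n + 1) 1 1 1) where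
  ne_zero h := by
    have := congrArg (eval 1) (congrArg (pderiv 0) h)
    simp [powerForm, (CharP.cast_eq_zero_iff K 2 n).mpr hn.two_dvd, CharTwo.add_self_eq_zero,
      hn0] at this
  isWeightedHomogeneous := by
    simpa using isWeightedHomogeneous_powerForm (w := -1) rfl (n + 1) (1 : K) 1 1
  sub_mem_succ := by
    have hlow : powerForm n 0 0 1 ∈ weightFiltration K (-1) (-n) :=
      mem_weightFiltration_of_isWeightedHomogeneous <| by
        simpa using isWeightedHomogeneous_powerForm (w := -1) rfl n (0 : K) 0 1
    rw [show (-(n + 1 : ℕ) + 1 : ℤ) = -n by lia]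
    simpa using add_mem (weightFiltration_antitone (by lia)
      (apnPolynomial_sub_powerForm_mem (K := K) hn hn0)) hlow

theorem totalDegree_add_totalDegree_of_mul_eq_apnPolynomial (hn : Even n) (hn0 : n ≠ 0)
    {u v : MvPolynomial (Fin 2) K} (huv : u * v = apnPolynomial K (n + 1)) :
    u.totalDegree + v.totalDegree = n + 1 := by
  have hf := huv ▸ hasInitialForm_apnPolynomial (K := K) hn hn0
  obtain ⟨F, hF⟩ := exists_hasInitialForm_neg_totalDegree hf.left_ne_zero
  rw [← totalDegree_mul_of_isDomain (left_ne_zero_of_mul hf.left_ne_zero)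
    (right_ne_zero_of_mul hf.left_ne_zero)]
  exact_mod_cast neg_injective (hF.unique hf).1

theorem isRelPrime_initialForm_of_mul_eq_apnPolynomial (hn : Even n) (hn0 : n ≠ 0) {a b : ℤ}
    {u v U V : MvPolynomial (Fin 2) K} (huv : u * v = apnPolynomial K (n + 1))
    (hu : HasInitialForm (-1) u a U) (hv : HasInitialForm (-1) v b V) : IsRelPrime U V := by
  obtain ⟨hab, hUV⟩ := (huv ▸ hu.mul hv).unique (hasInitialForm_apnPolynomial hn hn0)
  have hlow : IsWeightedHomogeneous (-1) (powerForm n (0 : K) 0 1) (a + b + 1) := by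
    convert isWeightedHomogeneous_powerForm (w := -1) rfl n (0 : K) 0 1 using 1
    simp [hab]
  obtain ⟨A, B, hAB⟩ := exists_eq_mul_add_mul_of_sub_mem hu hv hlow <| by
    rw [huv, hUV, hab]
    convert apnPolynomial_sub_powerForm_mem (K := K) hn hn0 using 2
    lia
  exact isRelPrime_of_mul_eq_powerForm hn hUV hAB

end AtInfinity

section AtSingularPoints

variable {K : Type*} [Field K] [CharP K 2] {i l : ℕ} {P : Fin 2 → K}

theorem mem_singularPoints_of_eval_pderiv_eq_zero (hi : i ≠ 0) (hl : 0 < l)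
    (hf : eval P (apnPolynomial K (2 ^ i * l + 1)) = 0)
    (hf' : ∀ j, eval P (pderiv j (apnPolynomial K (2 ^ i * l + 1))) = 0) :
    P ∈ singularPoints K l := by
  have h0 : P 0 ^ (2 ^ i * l) = (P 0 + P 1 + 1) ^ (2 ^ i * l) := by
    simpa [apnPolynomial, pderiv_X, hi, CharTwo.two_eq_zero, CharTwo.add_eq_zero] using hf' 0
  have h1 : P 1 ^ (2 ^ i * l) = (P 0 + P 1 + 1) ^ (2 ^ i * l) := by
    simpa [apnPolynomial, pderiv_X, hi, CharTwo.two_eq_zero, CharTwo.add_eq_zero] using hf' 1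
  have h2 : (P 0 + P 1 + 1) ^ (2 ^ i * l) = 1 := by
    simp only [apnPolynomial, map_add, map_pow, eval_X, map_one] at hf
    rw [pow_succ, pow_succ, pow_succ, h0, h1] at hf
    linear_combination hf + (-(P 0 + P 1 + 1) ^ (2 ^ i * l) * (P 0 + P 1) - 1) *
      CharTwo.two_eq_zero (R := K)
  rw [mem_singularPoints hl]
  simp only [← ExpChar.pow_prime_pow_mul_eq_one_iff 2 i l, h0, h1, h2, and_self]

theorem mem_singularPoints_of_mul_eq_apnPolynomial (hi : i ≠ 0) (hl : 0 < l)
    {u v : MvPolynomial (Fin 2) K} (huv : u * v = apnPolynomial K (2 ^ i * l + 1))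
    (hu : eval P u = 0) (hv : eval P v = 0) : P ∈ singularPoints K l :=
  mem_singularPoints_of_eval_pderiv_eq_zero hi hl (by simp [← huv, hu])
    fun j ↦ by simp [← huv, hu, hv]

theorem odd_of_dvd_two_pow_sub_one (hi : i ≠ 0) (hdvd : l ∣ 2 ^ i - 1) : Odd l :=
  (Nat.Even.sub_odd Nat.one_le_two_pow (even_two.pow_of_ne_zero hi) odd_one).of_dvd_nat hdvd

theorem add_C_pow_sub_mem_weightFiltration {σ : Type*} {z : MvPolynomial σ K}
    (hz : z ∈ weightFiltration K 1 1) (hi : i ≠ 0) (hdvd : l ∣ 2 ^ i - 1) {α : K}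
    (hα : α ^ l = 1) :
    (z + C α) ^ (2 ^ i * l + 1) - (z + C α + z ^ 2 ^ i + C α⁻¹ * z ^ (2 ^ i + 1)) ∈
      weightFiltration K 1 (2 ^ i + 1 + 1) := by
  have hl := odd_of_dvd_two_pow_sub_one hi hdvd
  have hα0 : α ≠ 0 := by
    rintro rfl
    simp [hl.pos.ne'] at hα
  have hαq : α ^ 2 ^ i = α := by
    obtain ⟨m, hm⟩ := hdvd
    rw [← Nat.sub_one_add_one (NeZero.ne (2 ^ i)), pow_succ, hm, pow_mul, hα, one_pow, one_mul]
  have hinv : α ^ (l - 1) = α⁻¹ := eq_inv_of_mul_eq_one_left <| by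
    rw [← pow_succ, Nat.sub_one_add_one hl.pos.ne', hα]
  have hcast : (l : MvPolynomial σ K) = 1 := by
    rw [CharTwo.natCast_eq_ite, if_neg (Nat.not_even_iff_odd.mpr hl)]
  obtain ⟨k, hk⟩ := Polynomial.powAddExpansion (C α) (z ^ 2 ^ i) l
  rw [← C_pow, ← C_pow, hα, hinv, hcast, one_mul, C_1] at hk
  have hinvC : C α⁻¹ * C α = (1 : MvPolynomial σ K) := by
    rw [← C_mul, inv_mul_cancel₀ hα0, C_1]
  have hrem : (z + C α) ^ (2 ^ i * l + 1) -
      (z + C α + z ^ 2 ^ i + C α⁻¹ * z ^ (2 ^ i + 1)) = k * (z + C α) * z ^ (2 ^ i * 2) := by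
    rw [pow_succ, pow_mul, add_pow_char_pow, ← C_pow, hαq, add_comm (z ^ _), hk]
    linear_combination z ^ 2 ^ i * hinvC
  rw [hrem]
  have htwo : 2 ≤ 2 ^ i := Nat.le_self_pow hi 2
  exact weightFiltration_antitone (by push_cast; lia) <|
    mul_mem_weightFiltration (mem_weightFiltration_one_zero _) (pow_mem_weightFiltration hz _)

theorem translateAlgEquiv_apnPolynomial_sub_powerForm_mem (hi : i ≠ 0)
    (hdvd : l ∣ 2 ^ i - 1) (hP : P ∈ singularPoints K l) :
    translateAlgEquiv P (apnPolynomial K (2 ^ i * l + 1)) -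
      powerForm (2 ^ i + 1) (P 0)⁻¹ (P 1)⁻¹ (P 0 + P 1 + 1)⁻¹ ∈
      weightFiltration K 1 (2 ^ i + 1 + 1) := by
  obtain ⟨h0, h1, h2⟩ := (mem_singularPoints (odd_of_dvd_two_pow_sub_one hi hdvd).pos).mp hP
  have hX (j : Fin 2) : (X j : MvPolynomial (Fin 2) K) ∈ weightFiltration K 1 1 :=
    mem_weightFiltration_of_isWeightedHomogeneous (isWeightedHomogeneous_X K 1 j)
  have hsum := add_mem (add_mem (add_C_pow_sub_mem_weightFiltration (hX 0) hi hdvd h0)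
    (add_C_pow_sub_mem_weightFiltration (hX 1) hi hdvd h1))
    (add_C_pow_sub_mem_weightFiltration (add_mem (hX 0) (hX 1)) hi hdvd h2)
  have htwo : (2 : MvPolynomial (Fin 2) K) = 0 := CharTwo.two_eq_zero
  convert hsum using 1
  have hfrob := add_pow_char_pow (p := 2) (n := i) (X 0 : MvPolynomial (Fin 2) K) (X 1)
  simp only [apnPolynomial, powerForm, map_add, map_pow, map_one, translateAlgEquiv_X]
  linear_combination hfrob +
    (1 + X 0 + X 1 + C (P 0) + C (P 1) + X 0 ^ 2 ^ i + X 1 ^ 2 ^ i) * htwo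

theorem squarefree_powerForm_inv (hi : i ≠ 0) (hl : 0 < l) (hP : P ∈ singularPoints K l) :
    Squarefree (powerForm (2 ^ i + 1) (P 0)⁻¹ (P 1)⁻¹ (P 0 + P 1 + 1)⁻¹) := by
  obtain ⟨h0, h1, h2⟩ := (mem_singularPoints hl).mp hP
  have hne {α : K} (hα : α ^ l = 1) : α ≠ 0 := by
    rintro rfl
    simp [hl.ne'] at hα
  have hdet : (P 0)⁻¹ * (P 1)⁻¹ + (P 1)⁻¹ * (P 0 + P 1 + 1)⁻¹ + (P 0 + P 1 + 1)⁻¹ * (P 0)⁻¹ =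
      (P 0 * P 1 * (P 0 + P 1 + 1))⁻¹ := by
    have := hne h0
    have := hne h1
    have := hne h2
    field_simp
    linear_combination (P 0 + P 1) * CharTwo.two_eq_zero (R := K)
  refine squarefree_powerForm hi (hdet ▸ inv_ne_zero ?_)
  exact mul_ne_zero (mul_ne_zero (hne h0) (hne h1)) (hne h2)

theorem hasInitialForm_translateAlgEquiv_apnPolynomial (hi : i ≠ 0)
    (hdvd : l ∣ 2 ^ i - 1) (hP : P ∈ singularPoints K l) :
    HasInitialForm 1 (translateAlgEquiv P (apnPolynomial K (2 ^ i * l + 1))) (2 ^ i + 1)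
      (powerForm (2 ^ i + 1) (P 0)⁻¹ (P 1)⁻¹ (P 0 + P 1 + 1)⁻¹) where
  ne_zero := (squarefree_powerForm_inv hi (odd_of_dvd_two_pow_sub_one hi hdvd).pos hP).ne_zero
  isWeightedHomogeneous := by
    simpa using isWeightedHomogeneous_powerForm (w := 1) rfl (2 ^ i + 1)
      (P 0)⁻¹ (P 1)⁻¹ (P 0 + P 1 + 1)⁻¹
  sub_mem_succ := translateAlgEquiv_apnPolynomial_sub_powerForm_mem hi hdvd hP

theorem add_eq_and_isRelPrime_of_mul_eq_apnPolynomial (hi : i ≠ 0)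
    (hdvd : l ∣ 2 ^ i - 1) (hP : P ∈ singularPoints K l) {u v A B : MvPolynomial (Fin 2) K}
    {a b : ℤ} (huv : u * v = apnPolynomial K (2 ^ i * l + 1))
    (hu : HasInitialForm 1 (translateAlgEquiv P u) a A)
    (hv : HasInitialForm 1 (translateAlgEquiv P v) b B) :
    a + b = 2 ^ i + 1 ∧ IsRelPrime A B := by
  have hf := hasInitialForm_translateAlgEquiv_apnPolynomial hi hdvd hP
  rw [← huv, map_mul] at hf
  obtain ⟨hab, hAB⟩ := (hu.mul hv).unique hf
  have hsq := squarefree_powerForm_inv hi (odd_of_dvd_two_pow_sub_one hi hdvd).pos hP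
  exact ⟨hab, .of_squarefree_mul (hAB ▸ hsq)⟩

end AtSingularPoints

section FactorsOfEqualDegree

variable {K : Type*} [Field K] [CharP K 2] {i l : ℕ} {u v : MvPolynomial (Fin 2) K}

theorem four_mul_totalDegree_mul_totalDegree_le [IsAlgClosed K] (hi : i ≠ 0)
    (hdvd : l ∣ 2 ^ i - 1) (huv : u * v = apnPolynomial K (2 ^ i * l + 1)) :
    4 * (u.totalDegree * v.totalDegree) ≤ (singularPoints K l).card * (2 ^ i + 1) ^ 2 := by
  have hl := (odd_of_dvd_two_pow_sub_one hi hdvd).pos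
  have hn : Even (2 ^ i * l) := (even_two.pow_of_ne_zero hi).mul_right l
  have hn0 : 2 ^ i * l ≠ 0 := by positivity
  obtain ⟨hu, hv⟩ : u ≠ 0 ∧ v ≠ 0 := mul_ne_zero_iff.mp <|
    huv ▸ (hasInitialForm_apnPolynomial hn hn0).left_ne_zero
  obtain ⟨U, hU⟩ := exists_hasInitialForm_neg_totalDegree hu
  obtain ⟨V, hV⟩ := exists_hasInitialForm_neg_totalDegree hv
  have htranslate (P : Fin 2 → K) := (translateAlgEquiv P).injective
  choose a A hA using fun P ↦ exists_hasInitialForm_order <|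
    (map_ne_zero_iff _ (htranslate P)).mpr hu
  choose b B hB using fun P ↦ exists_hasInitialForm_order <|
    (map_ne_zero_iff _ (htranslate P)).mpr hv
  have hlocal (P) (hP : P ∈ singularPoints K l) :=
    add_eq_and_isRelPrime_of_mul_eq_apnPolynomial hi hdvd hP huv (hA P) (hB P)
  calc 4 * (u.totalDegree * v.totalDegree)
    _ ≤ 4 * ∑ P ∈ singularPoints K l, a P * b P :=
      Nat.mul_le_mul_left 4 <| mul_le_sum_mul_of_hasInitialForm hU hV
        (isRelPrime_initialForm_of_mul_eq_apnPolynomial hn hn0 huv hU hV)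
        (fun P ↦ mem_singularPoints_of_mul_eq_apnPolynomial hi hl huv)
        fun P hP ↦ ⟨A P, B P, hA P, hB P, (hlocal P hP).2⟩
    _ ≤ ∑ P ∈ singularPoints K l, (2 ^ i + 1) ^ 2 := by
      rw [Finset.mul_sum]
      refine Finset.sum_le_sum fun P hP ↦ ?_
      rw [← mul_assoc, ← show a P + b P = 2 ^ i + 1 by exact_mod_cast (hlocal P hP).1]
      exact four_mul_le_sq_add (a P) (b P)
    _ = (singularPoints K l).card * (2 ^ i + 1) ^ 2 := by rw [Finset.sum_const, smul_eq_mul]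

theorem two_mul_add_one_le_of_dvd_sub_one {q l : ℕ} (hq : 1 < q) (hdvd : l ∣ q - 1)
    (hne : l ≠ q - 1) : 2 * l + 1 ≤ q := by
  obtain ⟨m, hm⟩ := hdvd
  have hm0 : m ≠ 0 := by
    rintro rfl
    lia
  have hm1 : m ≠ 1 := by
    rintro rfl
    lia
  have := Nat.mul_le_mul_left l (show 2 ≤ m by lia)
  lia

theorem sq_add_nine_lt_of_le {q l N : ℕ} (hl : 3 ≤ l) (hq : 2 * l + 1 ≤ q)
    (hN : N + l ≤ l * l + 1) : N * (q + 1) ^ 2 + 9 < (q * l + 1) ^ 2 := by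
  zify at *
  have hle : (N : ℤ) * (q + 1) ^ 2 ≤ (l * l + 1 - l) * (q + 1) ^ 2 :=
    mul_le_mul_of_nonneg_right (by linarith) (by positivity)
  have hgap : ((q : ℤ) * l + 1) ^ 2 - (l * l + 1 - l) * (q + 1) ^ 2 =
    (l - 1) * ((q + 1) * (q + 1 - 2 * l) + l - 1) := by ring
  have hfactor : (9 : ℤ) < (q + 1) * (q + 1 - 2 * l) + l - 1 := by nlinarith
  nlinarith [hle, hgap, hfactor]

theorem totalDegree_add_three_lt_of_mul_eq_apnPolynomial (hi : i ≠ 0) (hl : 3 ≤ l)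
    (hdvd : l ∣ 2 ^ i - 1) (hne : l ≠ 2 ^ i - 1) (huv : u * v = apnPolynomial K (2 ^ i * l + 1))
    (hle : v.totalDegree ≤ u.totalDegree) : v.totalDegree + 3 < u.totalDegree := by
  let φ := algebraMap K (AlgebraicClosure K)
  have : CharP (AlgebraicClosure K) 2 := charP_of_injective_algebraMap φ.injective 2
  have hdeg (p : MvPolynomial (Fin 2) K) : (map φ p).totalDegree = p.totalDegree := by
    simp only [totalDegree, support_map_of_injective _ φ.injective]
  have hlodd := odd_of_dvd_two_pow_sub_one hi hdvd
  have hsum : u.totalDegree + v.totalDegree = 2 ^ i * l + 1 :=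
    totalDegree_add_totalDegree_of_mul_eq_apnPolynomial ((even_two.pow_of_ne_zero hi).mul_right l)
      (by positivity) huv
  have hbezout := four_mul_totalDegree_mul_totalDegree_le (u := map φ u) (v := map φ v) hi hdvd
    (by simp [← map_mul, huv, apnPolynomial])
  rw [hdeg, hdeg] at hbezout
  have hgap := sq_add_nine_lt_of_le hl
    (two_mul_add_one_le_of_dvd_sub_one (Nat.one_lt_two_pow hi) hdvd hne)
    (card_singularPoints_add_le (K := AlgebraicClosure K) hlodd)
  obtain ⟨e, he⟩ := Nat.exists_eq_add_of_le hle
  rw [← hsum, he] at hgap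
  rw [he] at hbezout ⊢
  by_contra! h
  nlinarith

theorem totalDegree_X_add_one_mul_X_add_one_mul_X_add_X_le {R : Type*} [CommSemiring R]
    [Nontrivial R] :
    ((X 0 + 1) * (X 1 + 1) * (X 0 + X 1) : MvPolynomial (Fin 2) R).totalDegree ≤ 3 := by
  have hadd {p q : MvPolynomial (Fin 2) R} (hp : p.totalDegree ≤ 1) (hq : q.totalDegree ≤ 1) :
      (p + q).totalDegree ≤ 1 := (totalDegree_add p q).trans (max_le hp hq)
  have hX (j : Fin 2) : (X j : MvPolynomial (Fin 2) R).totalDegree ≤ 1 := (totalDegree_X j).le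
  have hone : (1 : MvPolynomial (Fin 2) R).totalDegree ≤ 1 := by simp
  grw [totalDegree_mul, totalDegree_mul, hadd (hX 0) hone, hadd (hX 1) hone, hadd (hX 0) (hX 1)]

end FactorsOfEqualDegree

theorem stmt_14_general {K : Type*} [Field K] [CharP K 2] (i l t : ℕ) (hi : 1 ≤ i) (hl : 3 ≤ l)
    (ht : t = 2 ^ i * l + 1) (hdvd : l ∣ 2 ^ i - 1) (hne : l ≠ 2 ^ i - 1)
    (g₁ g₂ : MvPolynomial (Fin 2) K)
    (hg : (X 0 + 1) * (X 1 + 1) * (X 0 + X 1) * (g₁ * g₂) =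
      X 0 ^ t + X 1 ^ t + 1 + (X 0 + X 1 + 1) ^ t) :
    g₁.totalDegree ≠ g₂.totalDegree := by
  subst ht
  intro hdeg
  set h : MvPolynomial (Fin 2) K := (X 0 + 1) * (X 1 + 1) * (X 0 + X 1)
  have hf : h * g₁ * g₂ = apnPolynomial K (2 ^ i * l + 1) := (mul_assoc _ _ _).trans hg
  have hne0 : h * g₁ ≠ 0 := left_ne_zero_of_mul <| hf ▸ (hasInitialForm_apnPolynomial
    ((even_two.pow_of_ne_zero (by lia)).mul_right l) (by positivity)).left_ne_zero
  have hlt := totalDegree_add_three_lt_of_mul_eq_apnPolynomial (by lia) hl hdvd hne hf <|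
    hdeg ▸ totalDegree_le_of_dvd_of_isDomain (dvd_mul_left g₁ h) hne0
  have hle : (h * g₁).totalDegree ≤ 3 + g₁.totalDegree :=
    (totalDegree_mul h g₁).trans <|
      Nat.add_le_add_right totalDegree_X_add_one_mul_X_add_one_mul_X_add_X_le _
  lia

/-- If `t = 2^i ℓ + 1` with `ℓ ∣ 2^i - 1`, `ℓ ≠ 2^i - 1`, and `g_t` is irreducible over
`𝔽₂`, then `g_t` does not split over the algebraic closure of `𝔽₂` into two nonconstant
factors of equal degree. -/
theorem stmt_14 (i l t : ℕ) (hi : 1 ≤ i) (hl : 3 ≤ l) (hlodd : Odd l)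
    (ht : t = 2 ^ i * l + 1) (hdvd : l ∣ 2 ^ i - 1) (hne : l ≠ 2 ^ i - 1)
    (g : MvPolynomial (Fin 2) (ZMod 2))
    (hg : (X 0 + 1) * (X 1 + 1) * (X 0 + X 1) * g =
      X 0 ^ t + X 1 ^ t + 1 + (X 0 + X 1 + 1) ^ t)
    (hirr : Irreducible g) :
    ¬ ∃ g₁ g₂ : MvPolynomial (Fin 2) (AlgebraicClosure (ZMod 2)),
      MvPolynomial.map (algebraMap (ZMod 2) (AlgebraicClosure (ZMod 2))) g = g₁ * g₂ ∧
      g₁.totalDegree = g₂.totalDegree ∧ 0 < g₁.totalDegree ∧ 0 < g₂.totalDegree := by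
  rintro ⟨g₁, g₂, hfac, hdeg, -, -⟩
  have : CharP (AlgebraicClosure (ZMod 2)) 2 :=
    charP_of_injective_algebraMap (algebraMap (ZMod 2) _).injective 2
  refine stmt_14_general i l t hi hl ht hdvd hne g₁ g₂ ?_ hdeg
  simpa [hfac] using
    congrArg (MvPolynomial.map (algebraMap (ZMod 2) (AlgebraicClosure (ZMod 2)))) hg
end
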